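/- Let w = Σ_{l=0}^{3} w^l be a graded form on ℝ³ whose components lie in H¹_loc, and assume that ∫[⟨δw,δφ⟩ + ⟨dw,dφ⟩ − ω²ε₀μ₀⟨w,φ⟩]dx + ⟨Q̃(γ,μ,ω)w,φ⟩ = 0 for every graded form φ = Σ_{l=0}^{3} φ^l with smooth compactly supported components, where dw and δw are taken degreewise using the weak derivatives of w. Then the graded form v := P(γ,μ,ω)w, defined almost everywhere from the weak derivatives of w, is a weak solution of P(γ,μ,ω)^t v = 0 on ℝ³, and moreover every component of every v^l belongs to H¹_loc. -/

import Mathlib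

noncomputable section

open MeasureTheory Finset

namespace EMPaper

abbrev Pt (n : ℕ) := Fin n → ℝ
abbrev GF (n : ℕ) := Finset (Fin n) → ℂ
abbrev Form (n : ℕ) := Pt n → GF n

variable {n : ℕ}

def msgn (I J : Finset (Fin n)) : ℂ :=
  (-1 : ℂ) ^ (((I ×ˢ J).filter fun p => p.2 < p.1).card)

def wedge (u v : GF n) : GF n := fun S =>
  ∑ I ∈ S.powerset, msgn I (S \ I) * u I * v (S \ I)

def vee (v u : GF n) : GF n := fun I =>
  ∑ J ∈ (univ \ I).powerset, msgn I J * v J * u (I ∪ J)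

def ginner (u v : GF n) : ℂ := ∑ S : Finset (Fin n), u S * v S

def gconj (u : GF n) : GF n := fun S => (starRingEnd ℂ) (u S)

def proj (l : ℕ) (u : GF n) : GF n := fun S => if S.card = l then u S else 0

def IsGrade (l : ℕ) (u : GF n) : Prop := ∀ S : Finset (Fin n), S.card ≠ l → u S = 0

def dxe (j : Fin n) : GF n := fun S => if S = {j} then 1 else 0

def oneG (c : Fin n → ℂ) : GF n := fun S => ∑ j, if S = {j} then c j else 0

def altSign (u : GF n) : GF n := fun S => (-1 : ℂ) ^ S.card * u S

def gd (D : Fin n → GF n) : GF n := fun S => ∑ j, wedge (dxe j) (D j) S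

def gdel (D : Fin n → GF n) : GF n := fun S =>
  (-1 : ℂ) ^ (S.card + 1) * ∑ j, vee (dxe j) (D j) S

def pd (j : Fin n) (f : Pt n → ℂ) : Pt n → ℂ := fun x => fderiv ℝ f x (Pi.single j 1)

def Dcl (φ : Form n) : Fin n → Form n := fun j x S => pd j (fun y => φ y S) x

def IsTest (φ : Pt n → ℂ) : Prop := ContDiff ℝ (⊤ : ℕ∞) φ ∧ HasCompactSupport φ

def TestForm (φ : Form n) : Prop := ∀ S : Finset (Fin n), IsTest fun x => φ x S

def L2loc (f : Pt n → ℂ) : Prop :=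
  AEStronglyMeasurable f (volume : Measure (Pt n)) ∧
    ∀ K : Set (Pt n), IsCompact K → IntegrableOn (fun x => ‖f x‖ ^ 2) K volume

def HasWeakPD (j : Fin n) (f g : Pt n → ℂ) : Prop :=
  ∀ φ : Pt n → ℂ, IsTest φ → ∫ x, g x * φ x = -∫ x, f x * pd j φ x

def H1locWith (w : Form n) (Dw : Fin n → Form n) : Prop :=
  (∀ S : Finset (Fin n), L2loc fun x => w x S) ∧
    (∀ (j : Fin n) (S : Finset (Fin n)),
      HasWeakPD j (fun x => w x S) fun x => Dw j x S) ∧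
    ∀ (j : Fin n) (S : Finset (Fin n)), L2loc fun x => Dw j x S

/-! The three-dimensional electromagnetic setting. -/

/-- The data of the medium: frequency `ω`, constants `ε₀, μ₀` and `C¹` coefficients
`ε, σ, μ` with `ε ≥ ε₀ > 0`, `μ ≥ μ₀ > 0`, `σ ≥ 0`. -/
structure Coeffs where
  ω : ℝ
  ε₀ : ℝ
  μ₀ : ℝ
  εf : Pt 3 → ℝ
  σf : Pt 3 → ℝ
  μf : Pt 3 → ℝ
  hω : 0 < ω
  hε₀ : 0 < ε₀
  hμ₀ : 0 < μ₀
  hεC1 : ContDiff ℝ 1 εf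
  hσC1 : ContDiff ℝ 1 σf
  hμC1 : ContDiff ℝ 1 μf
  hεge : ∀ x, ε₀ ≤ εf x
  hμge : ∀ x, μ₀ ≤ μf x
  hσge : ∀ x, 0 ≤ σf x

namespace Coeffs

variable (C : Coeffs)

/-- `γ = ε + iσ/ω`. -/
def γ : Pt 3 → ℂ := fun x => (C.εf x : ℂ) + Complex.I * (C.σf x : ℂ) / (C.ω : ℂ)

/-- `a = (1/2) Log γ`. -/
def a : Pt 3 → ℂ := fun x => (1 / 2 : ℂ) * Complex.log (C.γ x)

/-- `b = (1/2) Log μ`. -/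
def b : Pt 3 → ℂ := fun x => (1 / 2 : ℂ) * Complex.log ((C.μf x : ℂ))

/-- `γ^{1/2} = e^a`. -/
def sg : Pt 3 → ℂ := fun x => Complex.exp (C.a x)

/-- `μ^{1/2} = e^b`. -/
def sm : Pt 3 → ℂ := fun x => Complex.exp (C.b x)

/-- The one-form `da`. -/
def da : Form 3 := fun x => oneG fun j => pd j C.a x

/-- The one-form `db`. -/
def db : Form 3 := fun x => oneG fun j => pd j C.b x

/-- The one-form `d(γ^{1/2} μ^{1/2})`. -/
def dsgm : Form 3 := fun x => oneG fun j => pd j (fun y => C.sg y * C.sm y) x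

/-- The zeroth order coefficient `iω γ^{1/2} μ^{1/2}`. -/
def c0 : Pt 3 → ℂ := fun x => Complex.I * (C.ω : ℂ) * C.sg x * C.sm x

end Coeffs

/-- The zeroth order part of `P(γ,μ,ω)` at a point, given the values `A = da`, `B = db`
and `c = iωγ^{1/2}μ^{1/2}` there:
`da∧v¹ + da∨(v¹+v³) + db∧(v⁰+v²) − db∨v² + iωγ^{1/2}μ^{1/2} v`. -/
def P0 (A B : GF 3) (c : ℂ) (v : GF 3) : GF 3 :=
  wedge A (proj 1 v) + vee A (proj 1 v + proj 3 v) + wedge B (proj 0 v + proj 2 v)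
    - vee B (proj 2 v) + c • v

/-- The zeroth order part of `P(γ,μ,ω)^t` at a point:
`db∧v¹ + db∨(v¹+v³) + da∧(v⁰+v²) − da∨v² + iωγ^{1/2}μ^{1/2} v`. -/
def P0t (A B : GF 3) (c : ℂ) (v : GF 3) : GF 3 :=
  wedge B (proj 1 v) + vee B (proj 1 v + proj 3 v) + wedge A (proj 0 v + proj 2 v)
    - vee A (proj 2 v) + c • v

/-- `P(γ,μ,ω)v` at a point, computed from the partial derivatives `D j = ∂_j v`. -/
def Pfull (A B : GF 3) (c : ℂ) (D : Fin 3 → GF 3) (v : GF 3) : GF 3 :=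
  (gd fun j => altSign (D j)) + (gdel fun j => altSign (D j)) + P0 A B c v

/-- `P(γ,μ,ω)^t v` at a point, computed from the partial derivatives `D j = ∂_j v`. -/
def Ptfull (A B : GF 3) (c : ℂ) (D : Fin 3 → GF 3) (v : GF 3) : GF 3 :=
  -((gd fun j => altSign (D j)) + (gdel fun j => altSign (D j))) + P0t A B c v

/-- `v` is a weak solution of `P(γ,μ,ω)v = 0` on `ℝ³`. -/
def IsWeakSolP (C : Coeffs) (v : Form 3) : Prop :=
  ∀ φ : Form 3, TestForm φ →
    (∫ x, ginner (altSign (v x))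
        ((gd fun j => Dcl φ j x) + gdel fun j => Dcl φ j x))
      + (∫ x, ginner (P0 (C.da x) (C.db x) (C.c0 x) (v x)) (φ x)) = 0

/-- `v` is a weak solution of `P(γ,μ,ω)^t v = 0` on `ℝ³`. -/
def IsWeakSolPt (C : Coeffs) (v : Form 3) : Prop :=
  ∀ φ : Form 3, TestForm φ →
    (∫ x, ginner (-altSign (v x))
        ((gd fun j => Dcl φ j x) + gdel fun j => Dcl φ j x))
      + (∫ x, ginner (P0t (C.da x) (C.db x) (C.c0 x) (v x)) (φ x)) = 0

/-- The components of the Hodge star of the 2-form part: `∗(dx²∧dx³) = dx¹`,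
`∗(dx³∧dx¹) = dx²`, `∗(dx¹∧dx²) = dx³`. -/
def star2 (u : GF 3) : Fin 3 → ℂ := fun k =>
  if k = 0 then u {1, 2} else if k = 1 then -u {0, 2} else u {0, 1}

/-- `⟨c, D*(u⊙v)⟩` for 1-forms with components `u, v` and partial derivatives
`du j k = ∂_j u_k`, `dv j k = ∂_j v_k`, where
`D*(u⊙v) = −Σ_k (Σ_j ∂_j(u_j v_k + u_k v_j)) dx^k`. -/
def dstarPair (c u v : Fin 3 → ℂ) (du dv : Fin 3 → Fin 3 → ℂ) : ℂ :=
  ∑ k, c k * (-(∑ j, (du j j * v k + u j * dv j k + du j k * v j + u k * dv j j)))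

/-- The pairing `⟨Q(γ,μ,ω)w, φ⟩`, where `Dw` is the family of weak partial derivatives
of `w` and `φ` is a smooth compactly supported graded form.  The weak derivatives of the
scalar products and of the symmetric tensor products appearing in `Q` are expanded by
the Leibniz rule. -/
def Qpair (C : Coeffs) (w : Form 3) (Dw : Fin 3 → Form 3) (φ : Form 3) : ℂ :=
  -(∫ x, (C.ω : ℂ) ^ 2 * (C.γ x * (C.μf x : ℂ) - ((C.ε₀ * C.μ₀ : ℝ) : ℂ))
      * ginner (w x) (φ x))
  + (∫ x, ginner ((2 * Complex.I * (C.ω : ℂ)) •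
      (vee (C.dsgm x) (proj 1 (w x) + proj 3 (w x))
        + wedge (C.dsgm x) (proj 0 (w x) + proj 2 (w x)))) (φ x))
  + (∫ x, ginner (C.da x) (C.da x)
        * ginner (proj 0 (w x) + proj 2 (w x)) (proj 0 (φ x) + proj 2 (φ x))
      + ginner (C.db x) (C.db x)
        * ginner (proj 1 (w x) + proj 3 (w x)) (proj 1 (φ x) + proj 3 (φ x)))
  + (∫ x,
      (∑ j, pd j C.a x *
        (ginner (proj 2 (Dw j x) - proj 0 (Dw j x)) (proj 0 (φ x) + proj 2 (φ x))
          + ginner (proj 2 (w x) - proj 0 (w x)) (proj 0 (Dcl φ j x) + proj 2 (Dcl φ j x))))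
      + ∑ j, pd j C.b x *
        (ginner (proj 1 (Dw j x) - proj 3 (Dw j x)) (proj 1 (φ x) + proj 3 (φ x))
          + ginner (proj 1 (w x) - proj 3 (w x)) (proj 1 (Dcl φ j x) + proj 3 (Dcl φ j x))))
  + (∫ x, dstarPair (fun k => pd k C.b x) (fun j => w x {j}) (fun j => φ x {j})
      (fun j k => Dw j x {k}) (fun j k => Dcl φ j x {k}))
  + (∫ x, dstarPair (fun k => pd k C.a x) (star2 (w x)) (star2 (φ x))
      (fun j k => star2 (Dw j x) k) (fun j k => star2 (Dcl φ j x) k))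

/-- The pairing `⟨Q̃(γ,μ,ω)w, φ⟩`. -/
def Qtpair (C : Coeffs) (w : Form 3) (Dw : Fin 3 → Form 3) (φ : Form 3) : ℂ :=
  -(∫ x, (C.ω : ℂ) ^ 2 * (C.γ x * (C.μf x : ℂ) - ((C.ε₀ * C.μ₀ : ℝ) : ℂ))
      * ginner (w x) (φ x))
  + (∫ x, ginner ((-(2 * Complex.I * (C.ω : ℂ))) • vee (C.dsgm x) (proj 2 (w x))
      + (2 * Complex.I * (C.ω : ℂ)) • wedge (C.dsgm x) (proj 1 (w x))) (φ x))
  + (∫ x, ginner (C.db x) (C.db x)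
        * ginner (proj 0 (w x) + proj 2 (w x)) (proj 0 (φ x) + proj 2 (φ x))
      + ginner (C.da x) (C.da x)
        * ginner (proj 1 (w x) + proj 3 (w x)) (proj 1 (φ x) + proj 3 (φ x)))
  + (∫ x,
      (∑ j, pd j C.b x *
        (ginner (proj 0 (Dw j x) - proj 2 (Dw j x)) (proj 0 (φ x) + proj 2 (φ x))
          + ginner (proj 0 (w x) - proj 2 (w x)) (proj 0 (Dcl φ j x) + proj 2 (Dcl φ j x))))
      + ∑ j, pd j C.a x *
        (ginner (proj 3 (Dw j x) - proj 1 (Dw j x)) (proj 1 (φ x) + proj 3 (φ x))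
          + ginner (proj 3 (w x) - proj 1 (w x)) (proj 1 (Dcl φ j x) + proj 3 (Dcl φ j x))))
  - (∫ x, dstarPair (fun k => pd k C.a x) (fun j => w x {j}) (fun j => φ x {j})
      (fun j k => Dw j x {k}) (fun j k => Dcl φ j x {k}))
  - (∫ x, dstarPair (fun k => pd k C.b x) (star2 (w x)) (star2 (φ x))
      (fun j k => star2 (Dw j x) k) (fun j k => star2 (Dcl φ j x) k))

/-- The pairing `⟨q̃(γ,μ,ω)(v⁰+v³), φ⟩` for `φ = φ⁰ + φ³`, where `Dv` is the family of
weak partial derivatives of `v`. -/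
def qtPair (C : Coeffs) (v : Form 3) (Dv : Fin 3 → Form 3) (φ : Form 3) : ℂ :=
  -(∫ x, (C.ω : ℂ) ^ 2 * (C.γ x * (C.μf x : ℂ) - ((C.ε₀ * C.μ₀ : ℝ) : ℂ))
      * ginner (proj 0 (v x) + proj 3 (v x)) (φ x))
  + ∫ x, ginner (C.db x) (C.db x) * (v x ∅ * φ x ∅)
      + ginner (C.da x) (C.da x) * (v x univ * φ x univ)
      + (∑ j, pd j C.b x * (Dv j x ∅ * φ x ∅ + v x ∅ * Dcl φ j x ∅))
      + ∑ j, pd j C.a x * (Dv j x univ * φ x univ + v x univ * Dcl φ j x univ)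

/-!
The principal part of `P` is `∑ⱼ σⱼ ∂ⱼ`, where the Clifford multiplications `σⱼ` are symmetric for
the bilinear pairing of graded forms and satisfy `σⱼσₖ + σₖσⱼ = 2δⱼₖ`, and the formal transpose of
`P` is `Pᵗ`. Expanding `⟨Pw, Pφ⟩` therefore gives the pairing of the Hodge Laplacian, zeroth order
terms, and first order terms with coefficients `da` and `db`. Integrating by parts, the
contributions antisymmetric in a pair of indices vanish because the derivatives of a test form
commute, and what is left is exactly `⟨δw, δφ⟩ + ⟨dw, dφ⟩ - ω²ε₀μ₀⟨w, φ⟩ + Q̃`. So the hypothesis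
says `∫ ⟨Pw, Pφ⟩ = 0` for all test forms `φ`, which is the weak equation `Pᵗv = 0` for `v = Pw`.

Since `(∑ⱼ σⱼ ∂ⱼ)² = Δ`, testing `Pᵗv = 0` against `∑ⱼ σⱼ ∂ⱼθ` shows that each component of `v` is
locally square integrable with Laplacian a sum of first derivatives of locally square integrable
functions. Cutting off and passing to the Fourier side, such a function lies in `H¹_loc`.
-/

/-! ### Clifford multiplications on graded forms -/

lemma ginner_eq_dotProduct (u v : GF n) : ginner u v = u ⬝ᵥ v := rfl

/-- The sign of `dx^j ∧ dx^{S \ {j}}` relative to the increasing monomial `dx^S`. -/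
def posSign (j : Fin n) (S : Finset (Fin n)) : ℂ := (-1) ^ #{k ∈ S | k < j}

lemma posSign_mul_self (j : Fin n) (S : Finset (Fin n)) : posSign j S * posSign j S = 1 := by
  rw [posSign, ← pow_add, ← two_mul, pow_mul, neg_one_sq, one_pow]

lemma posSign_insert {j k : Fin n} {S : Finset (Fin n)} (hk : k ∉ S) :
    posSign j (insert k S) = (if k < j then -1 else 1) * posSign j S := by
  rw [posSign, posSign, filter_insert]
  split_ifs with h
  · rw [card_insert_of_notMem fun h' => hk (mem_of_mem_filter k h'), pow_succ', neg_one_mul]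
  · rw [one_mul]

lemma posSign_erase {j k : Fin n} {S : Finset (Fin n)} (hk : k ∈ S) :
    posSign j (S.erase k) = (if k < j then -1 else 1) * posSign j S := by
  have h := posSign_insert (j := j) (notMem_erase k S)
  rw [insert_erase hk] at h
  rw [h]
  split_ifs <;> ring

/-- Exterior multiplication `u ↦ dx^j ∧ u`. -/
def extMul (j : Fin n) : Module.End ℂ (GF n) where
  toFun u S := if j ∈ S then posSign j S * u (S.erase j) else 0
  map_add' u v := by ext S; simp only [Pi.add_apply, mul_add]; split_ifs <;> simp
  map_smul' c u := by ext S; simp [mul_left_comm]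

/-- Interior multiplication by `dx^j`, the transpose of `extMul j`. On `(l + 1)`-forms the vee
product `dx^j ∨ u` is `(-1)^l` times it. -/
def intMul (j : Fin n) : Module.End ℂ (GF n) where
  toFun u S := if j ∈ S then 0 else posSign j S * u (insert j S)
  map_add' u v := by ext S; simp only [Pi.add_apply, mul_add]; split_ifs <;> simp
  map_smul' c u := by ext S; simp [mul_left_comm]

lemma extMul_apply (j : Fin n) (u : GF n) (S : Finset (Fin n)) :
    extMul j u S = if j ∈ S then posSign j S * u (S.erase j) else 0 := rfl

lemma intMul_apply (j : Fin n) (u : GF n) (S : Finset (Fin n)) :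
    intMul j u S = if j ∈ S then 0 else posSign j S * u (insert j S) := rfl

lemma extMul_mul_extMul (j k : Fin n) : extMul j * extMul k = -(extMul k * extMul j) := by
  refine LinearMap.ext fun u => funext fun S => ?_
  simp only [Module.End.mul_apply, LinearMap.neg_apply, Pi.neg_apply, extMul_apply, mem_erase]
  rcases eq_or_ne j k with rfl | hjk
  · simp
  by_cases hj : j ∈ S <;> by_cases hk : k ∈ S <;> simp only [hj, hk, hjk, hjk.symm, ne_eq,
    not_false_eq_true, and_self, and_false, if_true, if_false, mul_zero, neg_zero]
  rw [posSign_erase hj, posSign_erase hk, erase_right_comm]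
  rcases lt_or_gt_of_ne hjk with h | h <;> simp only [h, h.not_gt, if_true, if_false] <;> ring

lemma extMul_dotProduct (j : Fin n) (u v : GF n) : extMul j u ⬝ᵥ v = u ⬝ᵥ intMul j v := by
  simp only [dotProduct, extMul_apply, intMul_apply, ite_mul, mul_ite, zero_mul, mul_zero]
  rw [← sum_filter, sum_ite, sum_const_zero, zero_add]
  refine sum_nbij' (·.erase j) (insert j) (by simp) (by simp)
    (fun S hS => insert_erase (mem_filter.1 hS).2) (fun S hS => erase_insert (mem_filter.1 hS).2)
    fun S hS => ?_
  have hj := (mem_filter.1 hS).2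
  rw [posSign_erase hj, insert_erase hj, if_neg (lt_irrefl j)]
  ring

lemma intMul_dotProduct (j : Fin n) (u v : GF n) : intMul j u ⬝ᵥ v = u ⬝ᵥ extMul j v := by
  rw [dotProduct_comm, ← extMul_dotProduct, dotProduct_comm]

lemma intMul_mul_intMul (j k : Fin n) : intMul j * intMul k = -(intMul k * intMul j) := by
  refine LinearMap.ext fun u => dotProduct_eq _ _ fun v => ?_
  have h := LinearMap.congr_fun (extMul_mul_extMul k j) v
  simp only [Module.End.mul_apply, LinearMap.neg_apply] at h ⊢
  rw [neg_dotProduct, intMul_dotProduct, intMul_dotProduct, intMul_dotProduct, intMul_dotProduct,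
    h, dotProduct_neg]

lemma intMul_mul_extMul (j k : Fin n) :
    intMul j * extMul k = (if j = k then 1 else 0) - extMul k * intMul j := by
  refine LinearMap.ext fun u => funext fun S => ?_
  rcases eq_or_ne j k with rfl | hjk
  · by_cases hj : j ∈ S
    · simp only [Module.End.mul_apply, LinearMap.sub_apply, Pi.sub_apply, extMul_apply,
        intMul_apply, hj, if_true, notMem_erase, if_false, insert_erase, Module.End.one_apply]
      rw [posSign_erase hj, if_neg (lt_irrefl j), one_mul, ← mul_assoc, posSign_mul_self]
      ring
    · simp only [Module.End.mul_apply, LinearMap.sub_apply, Pi.sub_apply, extMul_apply,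
        intMul_apply, hj, if_true, mem_insert_self, if_false, erase_insert, not_false_eq_true,
        Module.End.one_apply]
      rw [posSign_insert hj, if_neg (lt_irrefl j), one_mul, ← mul_assoc, posSign_mul_self]
      ring
  · simp only [Module.End.mul_apply, LinearMap.sub_apply, Pi.sub_apply, extMul_apply, intMul_apply,
      hjk, if_false, LinearMap.zero_apply, Pi.zero_apply, mem_erase, mem_insert, hjk.symm,
      false_or, ne_eq, not_false_eq_true, true_and]
    by_cases hj : j ∈ S <;> by_cases hk : k ∈ S <;>
      simp only [hj, hk, if_true, if_false, mul_zero, sub_zero]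
    rw [posSign_insert hj, posSign_erase hk, erase_insert_of_ne hjk]
    rcases lt_or_gt_of_ne hjk with h | h <;> simp only [h, h.not_gt, if_true, if_false] <;> ring

/-- The grade involution `u ↦ Σ (-1)^l u^l` as a linear map. -/
def gradeInv : Module.End ℂ (GF n) where
  toFun := altSign
  map_add' u v := by ext S; simp [altSign, mul_add]
  map_smul' c u := by ext S; simp [altSign, mul_left_comm]

lemma gradeInv_apply (u : GF n) (S : Finset (Fin n)) : gradeInv u S = (-1) ^ #S * u S := rfl

lemma gradeInv_mul_self : (gradeInv : Module.End ℂ (GF n)) * gradeInv = 1 := by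
  refine LinearMap.ext fun u => funext fun S => ?_
  simp only [Module.End.mul_apply, gradeInv_apply, Module.End.one_apply]
  rw [← mul_assoc, ← mul_pow]
  simp

lemma gradeInv_dotProduct (u v : GF n) : gradeInv u ⬝ᵥ v = u ⬝ᵥ gradeInv v := by
  simp only [dotProduct, gradeInv_apply, mul_assoc, mul_left_comm]

lemma gradeInv_mul_extMul (j : Fin n) : gradeInv * extMul j = -(extMul j * gradeInv) := by
  refine LinearMap.ext fun u => funext fun S => ?_
  by_cases hj : j ∈ S <;> simp only [Module.End.mul_apply, LinearMap.neg_apply, Pi.neg_apply,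
    gradeInv_apply, extMul_apply, hj, if_true, if_false, mul_zero, neg_zero]
  rw [← card_erase_add_one hj, pow_succ]
  ring

lemma gradeInv_mul_intMul (j : Fin n) : gradeInv * intMul j = -(intMul j * gradeInv) := by
  refine LinearMap.ext fun u => dotProduct_eq _ _ fun v => ?_
  have h := LinearMap.congr_fun (gradeInv_mul_extMul j) v
  simp only [Module.End.mul_apply, LinearMap.neg_apply] at h ⊢
  rw [neg_dotProduct, intMul_dotProduct, gradeInv_dotProduct, gradeInv_dotProduct,
    intMul_dotProduct, h, dotProduct_neg, neg_neg]

/-- The projection onto the forms of even degree. -/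
def evenPart : Module.End ℂ (GF n) := (1 / 2 : ℂ) • (1 + gradeInv)

/-- The projection onto the forms of odd degree. -/
def oddPart : Module.End ℂ (GF n) := (1 / 2 : ℂ) • (1 - gradeInv)

lemma evenPart_apply (u : GF n) (S : Finset (Fin n)) :
    evenPart u S = if Even #S then u S else 0 := by
  simp only [evenPart, LinearMap.smul_apply, LinearMap.add_apply, Module.End.one_apply,
    Pi.smul_apply, Pi.add_apply, gradeInv_apply, smul_eq_mul]
  split_ifs with h
  · rw [h.neg_one_pow]; ring
  · rw [(Nat.not_even_iff_odd.1 h).neg_one_pow]; ring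

lemma oddPart_apply (u : GF n) (S : Finset (Fin n)) :
    oddPart u S = if Even #S then 0 else u S := by
  simp only [oddPart, LinearMap.smul_apply, LinearMap.sub_apply, Module.End.one_apply,
    Pi.smul_apply, Pi.sub_apply, gradeInv_apply, smul_eq_mul]
  split_ifs with h
  · rw [h.neg_one_pow]; ring
  · rw [(Nat.not_even_iff_odd.1 h).neg_one_pow]; ring

/-- The Clifford multiplication `dx^j ∧ · - ι_j` by `dx^j`, with square `-1`; it is the symbol of
`d + δ`. -/
def cliffordNeg (j : Fin n) : Module.End ℂ (GF n) := extMul j - intMul j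

/-- The Clifford multiplication `dx^j ∧ · + ι_j` by `dx^j`, with square `1`; it carries the zeroth
order terms of `P`. -/
def cliffordPos (j : Fin n) : Module.End ℂ (GF n) := extMul j + intMul j

lemma cliffordNeg_dotProduct (j : Fin n) (u v : GF n) :
    cliffordNeg j u ⬝ᵥ v = -(u ⬝ᵥ cliffordNeg j v) := by
  simp only [cliffordNeg, LinearMap.sub_apply, sub_dotProduct, dotProduct_sub, extMul_dotProduct,
    intMul_dotProduct]
  ring

lemma cliffordPos_dotProduct (j : Fin n) (u v : GF n) :
    cliffordPos j u ⬝ᵥ v = u ⬝ᵥ cliffordPos j v := by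
  simp only [cliffordPos, LinearMap.add_apply, add_dotProduct, dotProduct_add, extMul_dotProduct,
    intMul_dotProduct]
  ring

lemma cliffordNeg_mul_cliffordNeg_add (j k : Fin n) :
    cliffordNeg j * cliffordNeg k + cliffordNeg k * cliffordNeg j
      = if j = k then (-2 : ℂ) • 1 else 0 := by
  have h := intMul_mul_extMul k j
  simp only [eq_comm (a := k)] at h
  simp only [cliffordNeg, sub_mul, mul_sub, intMul_mul_extMul j k, h, extMul_mul_extMul j k,
    intMul_mul_intMul j k]
  split_ifs <;> module

lemma cliffordPos_mul_cliffordPos_add (j k : Fin n) :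
    cliffordPos j * cliffordPos k + cliffordPos k * cliffordPos j
      = if j = k then (2 : ℂ) • 1 else 0 := by
  have h := intMul_mul_extMul k j
  simp only [eq_comm (a := k)] at h
  simp only [cliffordPos, add_mul, mul_add, intMul_mul_extMul j k, h, extMul_mul_extMul j k,
    intMul_mul_intMul j k]
  split_ifs <;> module

lemma cliffordPos_mul_cliffordNeg (j k : Fin n) :
    cliffordPos j * cliffordNeg k = -(cliffordNeg k * cliffordPos j) := by
  simp only [cliffordPos, cliffordNeg, add_mul, mul_add, sub_mul, mul_sub, intMul_mul_extMul j k,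
    extMul_mul_extMul j k, intMul_mul_intMul j k]
  have h := intMul_mul_extMul k j
  simp only [eq_comm (a := k)] at h
  rw [h]
  abel

lemma gradeInv_mul_cliffordNeg (j : Fin n) :
    gradeInv * cliffordNeg j = -(cliffordNeg j * gradeInv) := by
  rw [cliffordNeg, mul_sub, sub_mul, gradeInv_mul_extMul, gradeInv_mul_intMul, neg_sub_neg, neg_sub]

lemma gradeInv_mul_cliffordPos (j : Fin n) :
    gradeInv * cliffordPos j = -(cliffordPos j * gradeInv) := by
  rw [cliffordPos, mul_add, add_mul, gradeInv_mul_extMul, gradeInv_mul_intMul, neg_add]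

lemma sum_smul_mul_eq_of_anticomm {R : Type*} [Ring R] [Algebra ℂ R] {X : Fin n → R}
    (hX : ∀ j k, X j * X k + X k * X j = if j = k then (2 : ℂ) • 1 else 0)
    {H : Fin n → Fin n → ℂ} (hH : ∀ j k, H j k = H k j) :
    ∑ j, ∑ k, H j k • (X j * X k) = (∑ j, H j j) • (1 : R) := by
  have hswap : ∑ j, ∑ k, H j k • (X j * X k) = ∑ j, ∑ k, H j k • (X k * X j) := by
    rw [sum_comm]
    exact sum_congr rfl fun j _ => sum_congr rfl fun k _ => by rw [hH]
  have htwo : (2 : ℂ) • ∑ j, ∑ k, H j k • (X j * X k) = (2 : ℂ) • (∑ j, H j j) • (1 : R) := by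
    rw [two_smul]
    nth_rw 2 [hswap]
    simp only [← sum_add_distrib, ← smul_add, hX, smul_ite, smul_zero, sum_ite_eq, mem_univ,
      if_true, smul_smul, ← sum_smul, mul_sum, mul_comm]
  exact smul_right_injective R two_ne_zero htwo

lemma gradeInv_mul_evenPart : gradeInv * evenPart = (evenPart : Module.End ℂ (GF n)) := by
  rw [evenPart, mul_smul_comm, mul_add, gradeInv_mul_self, mul_one, add_comm]

lemma gradeInv_mul_oddPart : gradeInv * oddPart = -(oddPart : Module.End ℂ (GF n)) := by
  rw [oddPart, mul_smul_comm, mul_sub, gradeInv_mul_self, mul_one, ← neg_sub, smul_neg]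

lemma gradeInv_intMul_oddPart (j : Fin n) (u : GF n) :
    gradeInv (intMul j (oddPart u)) = intMul j (oddPart u) := by
  rw [← Module.End.mul_apply, gradeInv_mul_intMul, LinearMap.neg_apply, Module.End.mul_apply,
    ← Module.End.mul_apply gradeInv, gradeInv_mul_oddPart, LinearMap.neg_apply, map_neg, neg_neg]

lemma gradeInv_intMul_evenPart (j : Fin n) (u : GF n) :
    gradeInv (intMul j (evenPart u)) = -intMul j (evenPart u) := by
  rw [← Module.End.mul_apply, gradeInv_mul_intMul, LinearMap.neg_apply, Module.End.mul_apply,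
    ← Module.End.mul_apply gradeInv, gradeInv_mul_evenPart]

lemma evenPart_dotProduct (u v : GF n) : evenPart u ⬝ᵥ v = u ⬝ᵥ evenPart v := by
  simp [evenPart, gradeInv_dotProduct]

lemma oddPart_dotProduct (u v : GF n) : oddPart u ⬝ᵥ v = u ⬝ᵥ oddPart v := by
  simp [oddPart, gradeInv_dotProduct, sub_dotProduct]

lemma evenPart_mul_evenPart : evenPart * evenPart = (evenPart : Module.End ℂ (GF n)) := by
  nth_rw 1 [evenPart]
  rw [smul_mul_assoc, add_mul, gradeInv_mul_evenPart, one_mul]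
  module

lemma evenPart_mul_oddPart : evenPart * oddPart = (0 : Module.End ℂ (GF n)) := by
  rw [evenPart, smul_mul_assoc, add_mul, gradeInv_mul_oddPart, one_mul, add_neg_cancel, smul_zero]

lemma oddPart_mul_oddPart : oddPart * oddPart = (oddPart : Module.End ℂ (GF n)) := by
  nth_rw 1 [oddPart]
  rw [smul_mul_assoc, sub_mul, gradeInv_mul_oddPart, one_mul]
  module

lemma oddPart_mul_evenPart : oddPart * evenPart = (0 : Module.End ℂ (GF n)) := by
  rw [oddPart, smul_mul_assoc, sub_mul, gradeInv_mul_evenPart, one_mul, sub_self, smul_zero]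

lemma oddPart_add_evenPart : oddPart + evenPart = (1 : Module.End ℂ (GF n)) := by
  rw [oddPart, evenPart]
  module

/-- The Clifford multiplication `A ∧ · + ι_A` by the covector `A = Σ A_j dx^j`. -/
def covectorMul (A : Fin n → ℂ) : Module.End ℂ (GF n) := ∑ j, A j • cliffordPos j

lemma covectorMul_add (A B : Fin n → ℂ) :
    covectorMul (A + B) = covectorMul A + covectorMul B := by
  simp only [covectorMul, Pi.add_apply, add_smul, sum_add_distrib]

lemma covectorMul_dotProduct (A : Fin n → ℂ) (u v : GF n) :
    covectorMul A u ⬝ᵥ v = u ⬝ᵥ covectorMul A v := by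
  simp [covectorMul, sum_dotProduct, dotProduct_sum, cliffordPos_dotProduct]

lemma covectorMul_mul_self (A : Fin n → ℂ) :
    covectorMul A * covectorMul A = (∑ j, A j * A j) • (1 : Module.End ℂ (GF n)) := by
  rw [← sum_smul_mul_eq_of_anticomm cliffordPos_mul_cliffordPos_add (H := fun j k => A j * A k)
    fun j k => mul_comm _ _]
  simp only [covectorMul, sum_mul_sum, smul_mul_smul_comm]

lemma gradeInv_mul_covectorMul (A : Fin n → ℂ) :
    gradeInv * covectorMul A = -(covectorMul A * gradeInv) := by
  simp only [covectorMul, mul_sum, sum_mul, smul_mul_assoc, mul_smul_comm,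
    gradeInv_mul_cliffordPos, smul_neg, sum_neg_distrib]

lemma evenPart_mul_covectorMul (A : Fin n → ℂ) :
    evenPart * covectorMul A = covectorMul A * oddPart := by
  rw [evenPart, oddPart, smul_mul_assoc, mul_smul_comm, add_mul, mul_sub, gradeInv_mul_covectorMul,
    one_mul, mul_one, sub_eq_add_neg]

lemma oddPart_mul_covectorMul (A : Fin n → ℂ) :
    oddPart * covectorMul A = covectorMul A * evenPart := by
  rw [evenPart, oddPart, smul_mul_assoc, mul_smul_comm, sub_mul, mul_add, gradeInv_mul_covectorMul,
    one_mul, mul_one, sub_neg_eq_add]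

/-! ### The operators `d`, `δ` and `P` in terms of Clifford multiplications -/

lemma oneG_eq_sum_single (A : Fin n → ℂ) : oneG A = ∑ j, Pi.single {j} (A j) := by
  funext S
  simp [oneG, Pi.single_apply]

lemma oneG_dotProduct_oneG (A B : Fin n → ℂ) : oneG A ⬝ᵥ oneG B = ∑ j, A j * B j := by
  simp [oneG_eq_sum_single, sum_dotProduct, Pi.single_apply]

lemma dxe_eq_oneG (j : Fin n) : dxe j = oneG (Pi.single j 1) := by
  funext S
  simp only [dxe, oneG, Pi.single_apply]
  rw [sum_eq_single j (by simp +contextual) (by simp)]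
  simp

lemma msgn_singleton_left (j : Fin n) (S : Finset (Fin n)) :
    msgn {j} (S.erase j) = posSign j S := by
  rw [msgn, posSign, singleton_product, filter_map, card_map]
  congr 2
  ext k
  simp only [Function.comp_apply, Function.Embedding.coeFn_mk, mem_filter, mem_erase]
  exact ⟨fun h => ⟨h.1.2, h.2⟩, fun h => ⟨⟨h.2.ne, h.1⟩, h.2⟩⟩

lemma msgn_singleton_right {j : Fin n} {S : Finset (Fin n)} (hj : j ∉ S) :
    msgn S {j} = (-1) ^ #S * posSign j S := by
  have hcard : #{k ∈ S | j < k} + #{k ∈ S | k < j} = #S := by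
    rw [← card_filter_add_card_filter_not (s := S) (j < ·)]
    congr 2
    refine filter_congr fun k hk => ?_
    rw [not_lt, le_iff_lt_or_eq, or_iff_left]
    rintro rfl
    exact hj hk
  have hmsgn : msgn S {j} = (-1) ^ #{k ∈ S | j < k} := by
    rw [msgn, product_singleton, filter_map, card_map]
    rfl
  rw [hmsgn, ← hcard, pow_add, mul_assoc, ← posSign, posSign_mul_self, mul_one]

lemma wedge_oneG (A : Fin n → ℂ) (u : GF n) : wedge (oneG A) u = ∑ j, A j • extMul j u := by
  funext S
  simp only [wedge, oneG, mul_sum, sum_mul, Finset.sum_apply, Pi.smul_apply, extMul_apply,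
    smul_eq_mul]
  rw [sum_comm]
  refine sum_congr rfl fun j _ => ?_
  simp only [mul_ite, ite_mul, mul_zero, zero_mul, sum_ite_eq', mem_powerset, singleton_subset_iff,
    msgn_singleton_left, sdiff_singleton_eq_erase]
  split_ifs <;> ring

lemma vee_oneG (A : Fin n → ℂ) (u : GF n) :
    vee (oneG A) u = gradeInv (∑ j, A j • intMul j u) := by
  funext S
  simp only [vee, oneG, mul_sum, sum_mul, Finset.sum_apply, Pi.smul_apply, intMul_apply,
    smul_eq_mul, gradeInv_apply]
  rw [sum_comm]
  refine sum_congr rfl fun j _ => ?_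
  simp only [mul_ite, ite_mul, mul_zero, zero_mul, sum_ite_eq', mem_powerset, singleton_subset_iff,
    mem_sdiff, mem_univ, true_and]
  by_cases hj : j ∈ S <;> simp only [hj, not_true, not_false_eq_true, if_true, if_false]
  rw [msgn_singleton_right hj, union_comm, ← insert_eq]
  ring

lemma wedge_dxe (j : Fin n) (u : GF n) : wedge (dxe j) u = extMul j u := by
  rw [dxe_eq_oneG, wedge_oneG, sum_eq_single j (fun k _ hk => by simp [hk]) (by simp)]
  simp

lemma vee_dxe (j : Fin n) (u : GF n) : vee (dxe j) u = gradeInv (intMul j u) := by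
  rw [dxe_eq_oneG, vee_oneG, sum_eq_single j (fun k _ hk => by simp [hk]) (by simp)]
  simp

lemma gd_eq (D : Fin n → GF n) : gd D = ∑ j, extMul j (D j) := by
  funext S
  simp only [gd, wedge_dxe, Finset.sum_apply]

lemma gdel_eq (D : Fin n → GF n) : gdel D = -∑ j, intMul j (D j) := by
  funext S
  have hsign : (-1 : ℂ) ^ (#S + 1) * (-1) ^ #S = -1 := by
    rw [← pow_add]
    exact Odd.neg_one_pow ⟨#S, by ring⟩
  simp only [gdel, vee_dxe, gradeInv_apply, ← mul_sum, ← mul_assoc, hsign, Pi.neg_apply,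
    Finset.sum_apply, neg_one_mul]

lemma gd_add_gdel (D : Fin n → GF n) : gd D + gdel D = ∑ j, cliffordNeg j (D j) := by
  simp only [gd_eq, gdel_eq, cliffordNeg, LinearMap.sub_apply, sum_sub_distrib]
  rw [sub_eq_add_neg]

/-- The zeroth order part of `P(γ,μ,ω)`, without the scalar term, for `da = A` and `db = B`; its
transpose is obtained by exchanging `A` and `B`. -/
def zeroOrder (A B : Fin n → ℂ) : Module.End ℂ (GF n) :=
  covectorMul A * oddPart + covectorMul B * evenPart

lemma zeroOrder_dotProduct (A B : Fin n → ℂ) (u v : GF n) :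
    zeroOrder A B u ⬝ᵥ v = u ⬝ᵥ zeroOrder B A v := by
  have htranspose : zeroOrder B A = oddPart * covectorMul A + evenPart * covectorMul B := by
    rw [zeroOrder, oddPart_mul_covectorMul, evenPart_mul_covectorMul, add_comm]
  rw [htranspose]
  simp only [zeroOrder, LinearMap.add_apply, Module.End.mul_apply, add_dotProduct, dotProduct_add,
    oddPart_dotProduct, evenPart_dotProduct, covectorMul_dotProduct]

lemma zeroOrder_add_swap (A B : Fin n → ℂ) :
    zeroOrder A B + zeroOrder B A = covectorMul (A + B) := by
  rw [zeroOrder, zeroOrder, add_add_add_comm, ← add_mul, ← add_mul, add_comm (covectorMul B),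
    ← mul_add, oddPart_add_evenPart, mul_one, covectorMul_add]

lemma zeroOrder_swap_mul (A B : Fin n → ℂ) :
    zeroOrder B A * zeroOrder A B = (∑ j, B j * B j) • evenPart + (∑ j, A j * A j) • oddPart := by
  simp only [zeroOrder, mul_add, add_mul, mul_assoc, ← mul_assoc oddPart, ← mul_assoc evenPart,
    oddPart_mul_covectorMul, evenPart_mul_covectorMul, oddPart_mul_oddPart, oddPart_mul_evenPart,
    evenPart_mul_oddPart, evenPart_mul_evenPart, mul_zero, add_zero, zero_add,
    ← mul_assoc (covectorMul _) (covectorMul _), covectorMul_mul_self, smul_mul_assoc, one_mul]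
  exact add_comm _ _

/-- The principal symbol of `P(γ,μ,ω)` at `dx^j`. -/
def symbolP (j : Fin n) : Module.End ℂ (GF n) := cliffordNeg j * gradeInv

lemma symbolP_dotProduct (j : Fin n) (u v : GF n) : symbolP j u ⬝ᵥ v = u ⬝ᵥ symbolP j v := by
  rw [symbolP, Module.End.mul_apply, cliffordNeg_dotProduct, gradeInv_dotProduct,
    ← Module.End.mul_apply, gradeInv_mul_cliffordNeg, LinearMap.neg_apply, dotProduct_neg, neg_neg]

lemma symbolP_mul_symbolP_add (j k : Fin n) :
    symbolP j * symbolP k + symbolP k * symbolP j = if j = k then (2 : ℂ) • 1 else 0 := by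
  have h (j k : Fin n) :
      symbolP j * symbolP k = -(cliffordNeg j * cliffordNeg k : Module.End ℂ (GF n)) := by
    rw [symbolP, symbolP, mul_assoc, ← mul_assoc gradeInv, gradeInv_mul_cliffordNeg,
      neg_mul (cliffordNeg k * gradeInv) (gradeInv (n := n)), mul_assoc, gradeInv_mul_self, mul_one,
      mul_neg (cliffordNeg j)]
  rw [h, h, ← neg_add, cliffordNeg_mul_cliffordNeg_add]
  split_ifs <;> module

lemma symbolP_apply (j : Fin n) (u : GF n) : symbolP j u = -gradeInv (cliffordNeg j u) := by
  rw [symbolP, ← neg_eq_iff_eq_neg.2 (gradeInv_mul_cliffordNeg j)]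
  rfl

lemma sum_symbolP_dotProduct_sum_symbolP (D E : Fin n → GF n) :
    (∑ j, symbolP j (D j)) ⬝ᵥ (∑ j, symbolP j (E j))
      = (∑ j, cliffordNeg j (D j)) ⬝ᵥ (∑ j, cliffordNeg j (E j)) := by
  simp only [symbolP_apply, sum_neg_distrib, ← map_sum, neg_dotProduct_neg]
  rw [gradeInv_dotProduct, ← Module.End.mul_apply, gradeInv_mul_self, Module.End.one_apply]

lemma covectorMul_mul_cliffordNeg (A : Fin n → ℂ) (k : Fin n) :
    covectorMul A * cliffordNeg k = -(cliffordNeg k * covectorMul A) := by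
  simp only [covectorMul, sum_mul, mul_sum, smul_mul_assoc, mul_smul_comm,
    cliffordPos_mul_cliffordNeg, smul_neg, sum_neg_distrib]

lemma zeroOrder_mul_symbolP (A B : Fin n → ℂ) (k : Fin n) :
    zeroOrder B A * symbolP k
      = covectorMul B * cliffordNeg k * evenPart - covectorMul A * cliffordNeg k * oddPart := by
  have hgrade : gradeInv * (cliffordNeg k * gradeInv) = -cliffordNeg k := by
    rw [← mul_assoc, gradeInv_mul_cliffordNeg,
      neg_mul (cliffordNeg k * gradeInv) (gradeInv (n := n)), mul_assoc, gradeInv_mul_self, mul_one]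
  have hodd : oddPart * symbolP k = cliffordNeg k * evenPart := by
    rw [symbolP, oddPart, evenPart, smul_mul_assoc, mul_smul_comm, sub_mul, hgrade, one_mul,
      sub_neg_eq_add, mul_add, mul_one, add_comm]
  have heven : evenPart * symbolP k = -(cliffordNeg k * oddPart) := by
    rw [symbolP, oddPart, evenPart, smul_mul_assoc, mul_smul_comm, add_mul, hgrade, one_mul,
      mul_sub, mul_one]
    module
  rw [zeroOrder, add_mul, mul_assoc, hodd, mul_assoc, heven, mul_neg (covectorMul A),
    ← sub_eq_add_neg, mul_assoc, mul_assoc]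

lemma symbolP_mul_zeroOrder (A B : Fin n → ℂ) (k : Fin n) :
    symbolP k * zeroOrder A B = zeroOrder B A * symbolP k := by
  have hswap (X : Fin n → ℂ) :
      symbolP k * covectorMul X = covectorMul X * cliffordNeg k * gradeInv := by
    rw [symbolP, mul_assoc, gradeInv_mul_covectorMul, mul_neg (cliffordNeg k), ← mul_assoc,
      covectorMul_mul_cliffordNeg, neg_mul (cliffordNeg k * covectorMul X)]
  rw [zeroOrder_mul_symbolP, zeroOrder, mul_add, ← mul_assoc, ← mul_assoc, hswap, hswap, mul_assoc,
    mul_assoc _ gradeInv, gradeInv_mul_oddPart, gradeInv_mul_evenPart,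
    mul_neg (covectorMul A * cliffordNeg k) oddPart, neg_add_eq_sub]

lemma cliffordPos_sub_symbolP (j : Fin n) :
    cliffordPos j - symbolP j = (2 : ℂ) • (extMul j * oddPart + intMul j * evenPart) := by
  rw [symbolP, cliffordPos, cliffordNeg, oddPart, evenPart, mul_smul_comm, mul_smul_comm,
    ← smul_add, smul_smul, mul_one_div_cancel two_ne_zero, one_smul]
  simp only [sub_mul, mul_add, mul_sub, mul_one]
  abel

/-- The part of `cliffordPos j * cliffordNeg k` that is symmetric in `j` and `k`. -/
def symmPart (j k : Fin n) : Module.End ℂ (GF n) :=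
  (if j = k then 1 else 0) - extMul j * intMul k - extMul k * intMul j

lemma cliffordPos_mul_cliffordNeg_eq (j k : Fin n) :
    cliffordPos j * cliffordNeg k
      = symmPart j k + (extMul j * extMul k - intMul j * intMul k) := by
  rw [cliffordPos, cliffordNeg, symmPart, add_mul, mul_sub, mul_sub, intMul_mul_extMul]
  abel

/-- `P(γ,μ,ω)v` at a point, in any dimension, for `da = A`, `db = B`, the scalar term `c` and the
partial derivatives `D` of `v`. -/
def diracP (A B : Fin n → ℂ) (c : ℂ) (D : Fin n → GF n) (v : GF n) : GF n :=
  ∑ j, symbolP j (D j) + zeroOrder A B v + c • v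

/-- The derivative of `⟨Mu, p⟩`, expanded by the Leibniz rule, when `u` and `p` have the
derivatives `du` and `dp`, as a linear function of `M`. -/
def leibniz (u du p dp : GF n) : Module.End ℂ (GF n) →ₗ[ℂ] ℂ where
  toFun M := M du ⬝ᵥ p + M u ⬝ᵥ dp
  map_add' M N := by simp only [LinearMap.add_apply, add_dotProduct]; ring
  map_smul' c M := by simp [mul_add]

lemma leibniz_apply (u du p dp : GF n) (M : Module.End ℂ (GF n)) :
    leibniz u du p dp M = M du ⬝ᵥ p + M u ⬝ᵥ dp := rfl

lemma sum_leibniz_covectorMul (A : Fin n → ℂ) (D E : Fin n → GF n) (u p : GF n)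
    (M : Module.End ℂ (GF n)) :
    ∑ k, leibniz u (D k) p (E k) (covectorMul A * cliffordNeg k * M)
      = ∑ j, ∑ k, A j * leibniz u (D k) p (E k) (cliffordPos j * cliffordNeg k * M) := by
  rw [sum_comm]
  simp only [covectorMul, sum_mul, smul_mul_assoc, map_sum, map_smul, smul_eq_mul]

lemma mul_sum_leibniz_symbolP_add (c : ℂ) (A : Fin n → ℂ) (D E : Fin n → GF n) (u p : GF n) :
    c * (∑ k, leibniz u (D k) p (E k) (symbolP k) + covectorMul A u ⬝ᵥ p)
      = ∑ k, (c * leibniz u (D k) p (E k) (symbolP k) + c * A k * (cliffordPos k u ⬝ᵥ p)) := by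
  simp only [covectorMul, LinearMap.sum_apply, LinearMap.smul_apply, sum_dotProduct,
    smul_dotProduct, smul_eq_mul, ← sum_add_distrib, mul_sum, mul_add, mul_assoc]

lemma diracP_dotProduct_diracP (A B : Fin n → ℂ) (c : ℂ) (D E : Fin n → GF n) (u p : GF n) :
    diracP A B c D u ⬝ᵥ diracP A B c E p
      = (∑ j, cliffordNeg j (D j)) ⬝ᵥ (∑ j, cliffordNeg j (E j))
        + ∑ k, leibniz u (D k) p (E k) (zeroOrder B A * symbolP k)
        + c * (∑ k, leibniz u (D k) p (E k) (symbolP k) + covectorMul (A + B) u ⬝ᵥ p)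
        + ((∑ j, B j * B j) • evenPart u + (∑ j, A j * A j) • oddPart u) ⬝ᵥ p
        + c * c * (u ⬝ᵥ p) := by
  have hmixed : (∑ j, symbolP j (D j)) ⬝ᵥ zeroOrder A B p + zeroOrder A B u ⬝ᵥ ∑ j, symbolP j (E j)
      = ∑ k, leibniz u (D k) p (E k) (zeroOrder B A * symbolP k) := by
    simp only [leibniz_apply, ← zeroOrder_dotProduct, sum_dotProduct, dotProduct_sum,
      sum_add_distrib, Module.End.mul_apply, ← symbolP_dotProduct]
    simp only [← Module.End.mul_apply, symbolP_mul_zeroOrder]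
  have hscalar : (∑ j, symbolP j (D j)) ⬝ᵥ p + u ⬝ᵥ ∑ j, symbolP j (E j)
      = ∑ k, leibniz u (D k) p (E k) (symbolP k) := by
    simp only [leibniz_apply, sum_dotProduct, dotProduct_sum, sum_add_distrib, symbolP_dotProduct]
  have hswap : zeroOrder A B u ⬝ᵥ p + u ⬝ᵥ zeroOrder A B p
      = covectorMul (A + B) u ⬝ᵥ p := by
    rw [← zeroOrder_dotProduct, ← zeroOrder_add_swap, LinearMap.add_apply, add_dotProduct]
  have hquad : zeroOrder A B u ⬝ᵥ zeroOrder A B p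
      = ((∑ j, B j * B j) • evenPart u + (∑ j, A j * A j) • oddPart u) ⬝ᵥ p := by
    rw [← zeroOrder_dotProduct, ← Module.End.mul_apply, zeroOrder_swap_mul]
    rfl
  rw [← hmixed, ← hscalar, ← hswap, ← hquad, ← sum_symbolP_dotProduct_sum_symbolP]
  simp only [diracP, add_dotProduct, dotProduct_add, smul_dotProduct, dotProduct_smul, smul_eq_mul]
  ring

/-! ### Dimension three -/

lemma extMul_proj_top (j : Fin n) (u : GF n) : extMul j (proj n u) = 0 := by
  funext S
  have hcard (hj : j ∈ S) : #(S.erase j) ≠ n :=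
    ((card_erase_lt_of_mem hj).trans_le (by simpa using card_le_univ S)).ne
  simp only [extMul_apply, proj, Pi.zero_apply]
  split_ifs with hj hn
  exacts [absurd hn (hcard hj), mul_zero _, rfl]

lemma intMul_proj_zero (j : Fin n) (u : GF n) : intMul j (proj 0 u) = 0 := by
  funext S
  simp [intMul_apply, proj]

lemma evenPart_eq_proj (u : GF 3) : evenPart u = proj 0 u + proj 2 u := by
  funext S
  have h : #S ≤ 3 := by simpa using card_le_univ S
  simp only [evenPart_apply, proj, Pi.add_apply]
  interval_cases #S <;> simp [Nat.even_iff]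

lemma oddPart_eq_proj (u : GF 3) : oddPart u = proj 1 u + proj 3 u := by
  funext S
  have h : #S ≤ 3 := by simpa using card_le_univ S
  simp only [oddPart_apply, proj, Pi.add_apply]
  interval_cases #S <;> simp [Nat.even_iff]

lemma extMul_proj_one (j : Fin 3) (u : GF 3) : extMul j (proj 1 u) = extMul j (oddPart u) := by
  rw [oddPart_eq_proj, map_add, extMul_proj_top, add_zero]

lemma intMul_proj_two (j : Fin 3) (u : GF 3) : intMul j (proj 2 u) = intMul j (evenPart u) := by
  rw [evenPart_eq_proj, map_add, intMul_proj_zero, zero_add]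

lemma P0_oneG (A B : Fin 3 → ℂ) (c : ℂ) (v : GF 3) :
    P0 (oneG A) (oneG B) c v = zeroOrder A B v + c • v := by
  simp only [P0, wedge_oneG, vee_oneG, ← oddPart_eq_proj, ← evenPart_eq_proj, map_sum, map_smul,
    extMul_proj_one, intMul_proj_two, gradeInv_intMul_oddPart, gradeInv_intMul_evenPart, zeroOrder,
    covectorMul, cliffordPos, LinearMap.add_apply, Module.End.mul_apply, LinearMap.sum_apply,
    LinearMap.smul_apply, smul_add, sum_add_distrib, smul_neg, sum_neg_distrib]
  abel

lemma P0t_oneG (A B : Fin 3 → ℂ) (c : ℂ) (v : GF 3) :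
    P0t (oneG A) (oneG B) c v = zeroOrder B A v + c • v :=
  P0_oneG B A c v

lemma Pfull_oneG (A B : Fin 3 → ℂ) (c : ℂ) (D : Fin 3 → GF 3) (v : GF 3) :
    Pfull (oneG A) (oneG B) c D v = diracP A B c D v := by
  rw [Pfull, gd_add_gdel, P0_oneG, ← add_assoc]
  rfl

/-! ### Partial derivatives, test functions and local square integrability -/

lemma pd_mul {f g : Pt n → ℂ} (hf : Differentiable ℝ f) (hg : Differentiable ℝ g) (j : Fin n)
    (x : Pt n) : pd j (fun y => f y * g y) x = pd j f x * g x + f x * pd j g x := by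
  unfold pd
  rw [fderiv_fun_mul (hf x) (hg x)]
  simp only [add_apply, smul_apply, smul_eq_mul]
  ring

lemma pd_add {f g : Pt n → ℂ} (hf : Differentiable ℝ f) (hg : Differentiable ℝ g) (j : Fin n)
    (x : Pt n) : pd j (fun y => f y + g y) x = pd j f x + pd j g x := by
  unfold pd
  rw [fderiv_fun_add (hf x) (hg x), add_apply]

lemma pd_sum_mul_const {ι : Type*} (s : Finset ι) {f : ι → Pt n → ℂ}
    (hf : ∀ i, Differentiable ℝ (f i)) (c : ι → ℂ) (j : Fin n) (x : Pt n) :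
    pd j (fun y => ∑ i ∈ s, f i y * c i) x = ∑ i ∈ s, pd j (f i) x * c i := by
  unfold pd
  rw [fderiv_fun_sum fun i _ => ((hf i).mul_const (c i)) x, _root_.sum_apply]
  exact sum_congr rfl fun i _ => by rw [fderiv_mul_const (hf i x)]; simp [mul_comm]

lemma contDiff_pd {f : Pt n → ℂ} (hf : ContDiff ℝ (⊤ : ℕ∞) f) (j : Fin n) :
    ContDiff ℝ (⊤ : ℕ∞) (pd j f) :=
  (hf.fderiv_right (by simp)).clm_apply contDiff_const

lemma continuous_pd {f : Pt n → ℂ} (hf : ContDiff ℝ 1 f) (j : Fin n) : Continuous (pd j f) :=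
  (hf.continuous_fderiv one_ne_zero).clm_apply continuous_const

lemma pd_comm {f : Pt n → ℂ} (hf : ContDiff ℝ (⊤ : ℕ∞) f) (j k : Fin n) (x : Pt n) :
    pd j (pd k f) x = pd k (pd j f) x := by
  have hsymm : IsSymmSndFDerivAt ℝ f x :=
    hf.contDiffAt.isSymmSndFDerivAt (by simpa using WithTop.coe_le_coe.2 (le_top : (2 : ℕ∞) ≤ ⊤))
  have hdiff : Differentiable ℝ (fderiv ℝ f) :=
    (hf.fderiv_right (m := (⊤ : ℕ∞)) (by simp)).differentiable (by simp)
  have hsnd (i l : Fin n) :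
      pd i (pd l f) x = fderiv ℝ (fderiv ℝ f) x (Pi.single i 1) (Pi.single l 1) := by
    change fderiv ℝ (fun y => fderiv ℝ f y (Pi.single l 1)) x (Pi.single i 1) = _
    rw [fderiv_clm_apply (hdiff x) (by fun_prop)]
    simp
  rw [hsnd, hsnd]
  exact hsymm _ _

lemma tsupport_pd_subset (f : Pt n → ℂ) (j : Fin n) : tsupport (pd j f) ⊆ tsupport f := by
  have hsub : Function.support (pd j f) ⊆ Function.support (fderiv ℝ f) := fun x hx hfx =>
    hx (by rw [pd, hfx, zero_apply])
  exact (closure_mono hsub).trans (tsupport_fderiv_subset ℝ)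

lemma hasCompactSupport_pd {f : Pt n → ℂ} (hf : HasCompactSupport f) (j : Fin n) :
    HasCompactSupport (pd j f) :=
  hf.mono' (subset_closure.trans (tsupport_pd_subset f j))

lemma IsTest.continuous {φ : Pt n → ℂ} (hφ : IsTest φ) : Continuous φ := hφ.1.continuous

lemma IsTest.differentiable {φ : Pt n → ℂ} (hφ : IsTest φ) : Differentiable ℝ φ :=
  hφ.1.differentiable (by simp)

lemma IsTest.pd {φ : Pt n → ℂ} (hφ : IsTest φ) (j : Fin n) : IsTest (pd j φ) :=
  ⟨contDiff_pd hφ.1 j, hasCompactSupport_pd hφ.2 j⟩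

lemma IsTest.mul_contDiff {φ ψ : Pt n → ℂ} (hφ : IsTest φ) (hψ : ContDiff ℝ (⊤ : ℕ∞) ψ) :
    IsTest fun x => φ x * ψ x :=
  ⟨hφ.1.mul hψ, hφ.2.mul_right⟩

lemma IsTest.ofReal {p : Pt n → ℝ} (hp : ContDiff ℝ (⊤ : ℕ∞) p) (hc : HasCompactSupport p) :
    IsTest fun x => (p x : ℂ) :=
  ⟨Complex.ofRealCLM.contDiff.comp hp, hc.comp_left (g := fun r : ℝ => (r : ℂ)) (by simp)⟩

lemma exists_isTest_eq_one_on_ball (r : ℝ) :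
    ∃ χ : Pt n → ℂ, IsTest χ ∧ ∀ x ∈ Metric.ball (0 : Pt n) r, χ x = 1 := by
  let f : ContDiffBump (0 : Pt n) := ⟨|r| + 1, |r| + 2, by positivity, by linarith⟩
  refine ⟨fun x => (f x : ℂ), .ofReal f.contDiff f.hasCompactSupport, fun x hx => ?_⟩
  have hx' : x ∈ Metric.closedBall (0 : Pt n) (|r| + 1) :=
    Metric.mem_closedBall.2 ((Metric.mem_ball.1 hx).le.trans (by linarith [le_abs_self r]))
  simp only [f.one_of_mem_closedBall hx', Complex.ofReal_one]

lemma TestForm.dcl {φ : Form n} (hφ : TestForm φ) (j : Fin n) : TestForm (Dcl φ j) :=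
  fun S => (hφ S).pd j

lemma L2loc.memLp {f : Pt n → ℂ} (hf : L2loc f) {K : Set (Pt n)} (hK : IsCompact K) :
    MemLp f 2 (volume.restrict K) :=
  (memLp_two_iff_integrable_sq_norm hf.1.restrict).2 (hf.2 K hK)

lemma L2loc.of_memLp {f : Pt n → ℂ} (hf : AEStronglyMeasurable f (volume : Measure (Pt n)))
    (h : ∀ K : Set (Pt n), IsCompact K → MemLp f 2 (volume.restrict K)) : L2loc f :=
  ⟨hf, fun K hK => (memLp_two_iff_integrable_sq_norm hf.restrict).1 (h K hK)⟩

lemma L2loc.add {f g : Pt n → ℂ} (hf : L2loc f) (hg : L2loc g) : L2loc fun x => f x + g x :=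
  .of_memLp (hf.1.add hg.1) fun _ hK => (hf.memLp hK).add (hg.memLp hK)

lemma L2loc.sum {ι : Type*} (s : Finset ι) {f : ι → Pt n → ℂ} (h : ∀ i ∈ s, L2loc (f i)) :
    L2loc fun x => ∑ i ∈ s, f i x :=
  .of_memLp (aestronglyMeasurable_fun_sum _ fun i hi => (h i hi).1)
    fun _ hK => memLp_finsetSum s fun i hi => (h i hi).memLp hK

lemma L2loc.continuous_mul {f c : Pt n → ℂ} (hf : L2loc f) (hc : Continuous c) :
    L2loc fun x => c x * f x := by
  refine .of_memLp (hc.aestronglyMeasurable.mul hf.1) fun K hK => ?_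
  obtain ⟨M, hM⟩ := hK.exists_bound_of_continuousOn hc.continuousOn
  refine (hf.memLp hK).of_le_mul (c := M) (hc.aestronglyMeasurable.mul hf.1).restrict ?_
  filter_upwards [ae_restrict_mem hK.measurableSet] with x hx
  rw [norm_mul]
  gcongr
  exact hM x hx

lemma L2loc.locallyIntegrable {f : Pt n → ℂ} (hf : L2loc f) : LocallyIntegrable f volume := by
  refine locallyIntegrable_iff.2 fun K hK => ?_
  have : IsFiniteMeasure (volume.restrict K) := ⟨by simpa using hK.measure_lt_top⟩
  exact (hf.memLp hK).integrable one_le_two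

lemma L2loc.memLp_test_mul {f φ : Pt n → ℂ} (hf : L2loc f) (hφ : IsTest φ) :
    MemLp (fun x => φ x * f x) 2 volume := by
  have hmem := (hf.continuous_mul hφ.continuous).memLp hφ.2
  rw [← memLp_indicator_iff_restrict hφ.2.measurableSet] at hmem
  rwa [Set.indicator_eq_self.2] at hmem
  exact (Function.support_mul_subset_left φ f).trans (subset_tsupport φ)

lemma integrable_mul_of_hasCompactSupport {f ψ : Pt n → ℂ} (hf : LocallyIntegrable f volume)
    (hψ : Continuous ψ) (hc : HasCompactSupport ψ) : Integrable (fun x => f x * ψ x) volume := by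
  simpa [mul_comm] using hf.integrable_smul_left_of_hasCompactSupport hψ hc

lemma end_apply_eq_sum (M : Module.End ℂ (GF n)) (u : GF n) (S : Finset (Fin n)) :
    M u S = ∑ T, M (Pi.single T 1) S * u T := by
  conv_lhs => rw [pi_eq_sum_univ' u, map_sum, Finset.sum_apply]
  simp only [map_smul, Pi.smul_apply, smul_eq_mul, mul_comm]

/-- A graded form with locally square integrable components. -/
def L2locForm (u : Form n) : Prop := ∀ S : Finset (Fin n), L2loc fun x => u x S

namespace L2locForm

variable {u v : Form n}

lemma add (hu : L2locForm u) (hv : L2locForm v) : L2locForm fun x => u x + v x :=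
  fun S => (hu S).add (hv S)

lemma sum {ι : Type*} [Fintype ι] {u : ι → Form n} (hu : ∀ i, L2locForm (u i)) :
    L2locForm fun x => ∑ i, u i x := fun S => by
  simpa only [Finset.sum_apply] using L2loc.sum univ fun i _ => hu i S

lemma smul {c : Pt n → ℂ} (hc : Continuous c) (hu : L2locForm u) : L2locForm fun x => c x • u x :=
  fun S => (hu S).continuous_mul hc

lemma map (M : Module.End ℂ (GF n)) (hu : L2locForm u) : L2locForm fun x => M (u x) := fun S => by
  have h := L2loc.sum univ fun T _ =>
    (hu T).continuous_mul (continuous_const (y := M (Pi.single T 1) S))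
  simpa only [end_apply_eq_sum M (u _)] using h

lemma integrable_dotProduct {φ : Form n} (hu : L2locForm u) (hφ : TestForm φ) :
    Integrable (fun x => u x ⬝ᵥ φ x) volume :=
  integrable_finsetSum _ fun S _ =>
    integrable_mul_of_hasCompactSupport (hu S).locallyIntegrable (hφ S).continuous (hφ S).2

lemma integrable_continuous_mul_dotProduct {φ : Form n} (hu : L2locForm u) (hφ : TestForm φ)
    {c : Pt n → ℂ} (hc : Continuous c) : Integrable (fun x => c x * (u x ⬝ᵥ φ x)) volume := by
  simpa only [smul_dotProduct, smul_eq_mul] using (hu.smul hc).integrable_dotProduct hφ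

end L2locForm

lemma H1locWith.l2locForm {w : Form n} {Dw : Fin n → Form n} (hw : H1locWith w Dw) :
    L2locForm w := hw.1

lemma H1locWith.l2locForm_weakPD {w : Form n} {Dw : Fin n → Form n} (hw : H1locWith w Dw)
    (j : Fin n) : L2locForm (Dw j) := hw.2.2 j

/-! ### Weak derivatives tested with `C¹` functions -/

section Mollification

open scoped Convolution
open Filter Topology

/-- A bump function at the origin whose support shrinks to a point as `m → ∞`. -/
def shrinkingBump (m : ℕ) : ContDiffBump (0 : Pt n) :=
  ⟨1 / (2 * (m + 1)), 1 / (m + 1), by positivity, by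
    have : (0 : ℝ) < m + 1 := by positivity
    exact one_div_lt_one_div_of_lt this (by linarith)⟩

lemma shrinkingBump_rOut_le_one (m : ℕ) : (shrinkingBump (n := n) m).rOut ≤ 1 := by
  change 1 / ((m : ℝ) + 1) ≤ 1
  exact (div_le_one (by positivity)).2 (by simp)

/-- The convolution of `h` with the normalized bump function `shrinkingBump m`. -/
def mollify (m : ℕ) (h : Pt n → ℂ) : Pt n → ℂ :=
  (shrinkingBump m).normed volume ⋆[ContinuousLinearMap.lsmul ℝ ℝ, volume] h

lemma mollify_eq_zero (m : ℕ) {h : Pt n → ℂ} (hc : Continuous h) {x : Pt n}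
    (hx : x ∉ Metric.cthickening 1 (tsupport h)) : mollify m h x = 0 := by
  have hzero : ∀ y ∈ Metric.ball x 1, h y = 0 := fun y hy => by
    by_contra hne
    refine hx (Metric.mem_cthickening_of_dist_le x y 1 _ (subset_tsupport _ hne) ?_)
    rw [dist_comm]
    exact (Metric.mem_ball.1 hy).le
  have hx0 : h x = 0 := hzero x (by simp)
  have hdist := (shrinkingBump m).dist_normed_convolution_le (μ := volume) (x₀ := x) (ε := 0)
    hc.aestronglyMeasurable fun y hy => by
      rw [hx0, hzero y (Metric.ball_subset_ball (shrinkingBump_rOut_le_one m) hy), dist_self]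
  rw [hx0] at hdist
  exact dist_le_zero.1 hdist

lemma norm_mollify_le (m : ℕ) {h : Pt n → ℂ} (hc : Continuous h) {M : ℝ} (hM : ∀ x, ‖h x‖ ≤ M)
    (x : Pt n) : ‖mollify m h x‖ ≤ 3 * M := by
  have hdist : dist (mollify m h x) (h x) ≤ 2 * M :=
    (shrinkingBump m).dist_normed_convolution_le hc.aestronglyMeasurable fun y _ =>
      (dist_le_norm_add_norm _ _).trans (by linarith [hM x, hM y])
  rw [dist_eq_norm] at hdist
  linarith [norm_le_insert' (mollify m h x) (h x), hM x]

lemma tendsto_mollify {h : Pt n → ℂ} (hc : Continuous h) (x : Pt n) :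
    Tendsto (fun m => mollify m h x) atTop (𝓝 (h x)) :=
  ContDiffBump.convolution_tendsto_right_of_continuous (φ := shrinkingBump)
    tendsto_one_div_add_atTop_nhds_zero_nat hc x

lemma isTest_mollify (m : ℕ) {h : Pt n → ℂ} (hc : Continuous h) (hs : HasCompactSupport h) :
    IsTest (mollify m h) :=
  ⟨(shrinkingBump m).hasCompactSupport_normed.contDiff_convolution_left _
      (shrinkingBump m).contDiff_normed hc.locallyIntegrable,
    HasCompactSupport.intro hs.isCompact.cthickening fun _ hx => mollify_eq_zero m hc hx⟩

lemma pd_mollify (m : ℕ) {h : Pt n → ℂ} (hc : ContDiff ℝ 1 h) (hs : HasCompactSupport h)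
    (j : Fin n) : pd j (mollify m h) = mollify m (pd j h) := by
  have hbump : LocallyIntegrable ((shrinkingBump (n := n) m).normed volume) volume :=
    ((shrinkingBump m).contDiff_normed (n := 0)).continuous.locallyIntegrable
  ext x
  have hderiv : HasFDerivAt (mollify m h) _ x :=
    hs.hasFDerivAt_convolution_right (ContinuousLinearMap.lsmul ℝ ℝ) hbump hc x
  rw [pd, hderiv.fderiv, convolution_precompR_apply _ hbump (hs.fderiv ℝ)
    (hc.continuous_fderiv one_ne_zero)]
  rfl

lemma tendsto_integral_mul_mollify {h g : Pt n → ℂ} (hc : Continuous h) (hs : HasCompactSupport h)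
    (hg : LocallyIntegrable g volume) :
    Tendsto (fun m => ∫ x, g x * mollify m h x) atTop (𝓝 (∫ x, g x * h x)) := by
  obtain ⟨M, hM⟩ := hs.exists_bound_of_continuous hc
  set K := Metric.cthickening 1 (tsupport h)
  have hK : IsCompact K := hs.isCompact.cthickening
  refine tendsto_integral_of_dominated_convergence (K.indicator fun x => ‖g x‖ * (3 * M))
    (fun m => hg.aestronglyMeasurable.mul (isTest_mollify m hc hs).continuous.aestronglyMeasurable)
    ((integrable_indicator_iff hK.measurableSet).2
      ((hg.integrableOn_isCompact hK).norm.mul_const _))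
    (fun m => .of_forall fun x => ?_) (.of_forall fun x => (tendsto_mollify hc x).const_mul _)
  by_cases hx : x ∈ K
  · rw [Set.indicator_of_mem hx, norm_mul]
    gcongr
    exact norm_mollify_le m hc hM x
  · rw [Set.indicator_of_notMem hx, mollify_eq_zero m hc hx, mul_zero, norm_zero]

end Mollification

namespace HasWeakPD

variable {f g gj gk : Pt n → ℂ} {j k : Fin n}

lemma integral_mul_contDiff (h : HasWeakPD j f g) (hf : LocallyIntegrable f volume)
    (hg : LocallyIntegrable g volume) {ψ : Pt n → ℂ} (hψ : ContDiff ℝ 1 ψ)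
    (hs : HasCompactSupport ψ) : ∫ x, g x * ψ x = -∫ x, f x * pd j ψ x := by
  have hleft := tendsto_integral_mul_mollify hψ.continuous hs hg
  have hright :=
    (tendsto_integral_mul_mollify (continuous_pd hψ j) (hasCompactSupport_pd hs j) hf).neg
  refine tendsto_nhds_unique hleft (hright.congr fun m => ?_)
  rw [h _ (isTest_mollify m hψ.continuous hs), pd_mollify m hψ hs]

lemma integral_mul_pd_comm (hj : HasWeakPD j f gj) (hk : HasWeakPD k f gk) {ψ : Pt n → ℂ}
    (hψ : IsTest ψ) : ∫ x, gj x * pd k ψ x = ∫ x, gk x * pd j ψ x := by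
  rw [hj _ (hψ.pd k), hk _ (hψ.pd j)]
  simp only [pd_comm hψ.1]

lemma integral_mul_pd_comm_contDiff (hj : HasWeakPD j f gj) (hk : HasWeakPD k f gk)
    (hgj : LocallyIntegrable gj volume) (hgk : LocallyIntegrable gk volume) {ψ : Pt n → ℂ}
    (hψ : ContDiff ℝ 1 ψ) (hs : HasCompactSupport ψ) :
    ∫ x, gj x * pd k ψ x = ∫ x, gk x * pd j ψ x := by
  have hleft := tendsto_integral_mul_mollify (continuous_pd hψ k) (hasCompactSupport_pd hs k) hgj
  have hright := tendsto_integral_mul_mollify (continuous_pd hψ j) (hasCompactSupport_pd hs j) hgk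
  refine tendsto_nhds_unique hleft (hright.congr fun m => ?_)
  rw [← pd_mollify m hψ hs, ← pd_mollify m hψ hs]
  exact (hj.integral_mul_pd_comm hk (isTest_mollify m hψ.continuous hs)).symm

end HasWeakPD

lemma exists_contDiff_hasCompactSupport_eq_on_ball {c : Pt n → ℂ} (hc : ContDiff ℝ 1 c) (r : ℝ) :
    ∃ ψ : Pt n → ℂ, ContDiff ℝ 1 ψ ∧ HasCompactSupport ψ ∧
      ∀ x ∈ Metric.ball (0 : Pt n) r, ψ x = c x ∧ ∀ j, pd j ψ x = pd j c x := by
  obtain ⟨χ, hχ, hχ1⟩ := exists_isTest_eq_one_on_ball (n := n) r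
  refine ⟨fun x => χ x * c x, (hχ.1.of_le (by simp)).mul hc, hχ.2.mul_right, fun x hx => ?_⟩
  have heq : (fun y => χ y * c y) =ᶠ[nhds x] c := by
    filter_upwards [Metric.isOpen_ball.mem_nhds hx] with y hy
    rw [hχ1 y hy, one_mul]
  exact ⟨heq.eq_of_nhds, fun j => by rw [pd, pd, heq.fderiv_eq]⟩

namespace HasWeakPD

variable {f g gj gk c : Pt n → ℂ} {j k : Fin n} {r : ℝ}

lemma integral_contDiff_mul (h : HasWeakPD j f g) (hf : LocallyIntegrable f volume)
    (hg : LocallyIntegrable g volume) (hf0 : ∀ x ∉ Metric.ball 0 r, f x = 0)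
    (hg0 : ∀ x ∉ Metric.ball 0 r, g x = 0) (hc : ContDiff ℝ 1 c) :
    ∫ x, c x * g x = -∫ x, pd j c x * f x := by
  obtain ⟨ψ, hψ, hs, hψc⟩ := exists_contDiff_hasCompactSupport_eq_on_ball hc r
  have hg' (x : Pt n) : c x * g x = g x * ψ x := by
    by_cases hx : x ∈ Metric.ball 0 r
    · rw [(hψc x hx).1, mul_comm]
    · rw [hg0 x hx, mul_zero, zero_mul]
  have hf' (x : Pt n) : pd j c x * f x = f x * pd j ψ x := by
    by_cases hx : x ∈ Metric.ball 0 r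
    · rw [(hψc x hx).2, mul_comm]
    · rw [hf0 x hx, mul_zero, zero_mul]
  simp only [hg', hf', h.integral_mul_contDiff hf hg hψ hs]

lemma integral_pd_mul_comm (hj : HasWeakPD j f gj) (hk : HasWeakPD k f gk)
    (hgj : LocallyIntegrable gj volume) (hgk : LocallyIntegrable gk volume)
    (hgj0 : ∀ x ∉ Metric.ball 0 r, gj x = 0) (hgk0 : ∀ x ∉ Metric.ball 0 r, gk x = 0)
    (hc : ContDiff ℝ 1 c) :
    ∫ x, pd k c x * gj x = ∫ x, pd j c x * gk x := by
  obtain ⟨ψ, hψ, hs, hψc⟩ := exists_contDiff_hasCompactSupport_eq_on_ball hc r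
  have hcut {g : Pt n → ℂ} (hg0 : ∀ x ∉ Metric.ball 0 r, g x = 0) (i : Fin n) (x : Pt n) :
      pd i c x * g x = g x * pd i ψ x := by
    by_cases hx : x ∈ Metric.ball 0 r
    · rw [(hψc x hx).2, mul_comm]
    · rw [hg0 x hx, mul_zero, zero_mul]
  simp only [hcut hgj0, hcut hgk0, hj.integral_mul_pd_comm_contDiff hk hgj hgk hψ hs]

lemma mul_test (h : HasWeakPD j f g) (hf : LocallyIntegrable f volume)
    (hg : LocallyIntegrable g volume) {φ : Pt n → ℂ} (hφ : IsTest φ) :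
    HasWeakPD j (fun x => f x * φ x) (fun x => g x * φ x + f x * pd j φ x) := by
  intro θ hθ
  have hint {u φ₁ φ₂ : Pt n → ℂ} (hu : LocallyIntegrable u volume) (h₁ : IsTest φ₁)
      (h₂ : IsTest φ₂) : Integrable (fun x => u x * φ₁ x * φ₂ x) volume := by
    simpa only [mul_assoc] using integrable_mul_of_hasCompactSupport (ψ := fun x => φ₁ x * φ₂ x) hu
      (h₁.continuous.mul h₂.continuous) h₁.2.mul_right
  have hprod := h _ (hφ.mul_contDiff hθ.1)
  simp only [pd_mul hφ.differentiable hθ.differentiable, mul_add, ← mul_assoc] at hprod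
  rw [integral_add (hint hf (hφ.pd j) hθ) (hint hf hφ (hθ.pd j))] at hprod
  simp only [add_mul]
  rw [integral_add (hint hg hφ hθ) (hint hf (hφ.pd j) hθ), hprod]
  ring

lemma sum {ι : Type*} [Fintype ι] {f g : ι → Pt n → ℂ} (h : ∀ i, HasWeakPD j (f i) (g i))
    (hf : ∀ i, LocallyIntegrable (f i) volume) (hg : ∀ i, LocallyIntegrable (g i) volume) :
    HasWeakPD j (fun x => ∑ i, f i x) (fun x => ∑ i, g i x) := by
  intro θ hθ
  simp only [sum_mul]
  rw [integral_finsetSum _ fun i _ =>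
      integrable_mul_of_hasCompactSupport (hg i) hθ.continuous hθ.2,
    integral_finsetSum _ fun i _ =>
      integrable_mul_of_hasCompactSupport (hf i) (hθ.pd j).continuous (hθ.pd j).2,
    ← sum_neg_distrib]
  exact sum_congr rfl fun i _ => h i θ hθ

lemma const_mul (h : HasWeakPD j f g) (a : ℂ) :
    HasWeakPD j (fun x => a * f x) (fun x => a * g x) := by
  intro θ hθ
  simp only [mul_assoc, integral_const_mul, h θ hθ, mul_neg]

end HasWeakPD

namespace H1locWith

variable {w φ : Form n} {Dw : Fin n → Form n}

lemma map (hw : H1locWith w Dw) (M : Module.End ℂ (GF n)) :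
    H1locWith (fun x => M (w x)) (fun j x => M (Dw j x)) := by
  refine ⟨hw.l2locForm.map M, fun j S => ?_, fun j => (hw.l2locForm_weakPD j).map M⟩
  simp only [end_apply_eq_sum M (w _), end_apply_eq_sum M (Dw j _)]
  exact .sum (fun T => (hw.2.1 j T).const_mul _)
    (fun T => ((hw.1 T).continuous_mul continuous_const).locallyIntegrable)
    fun T => ((hw.2.2 j T).continuous_mul continuous_const).locallyIntegrable

lemma hasWeakPD_dotProduct (hw : H1locWith w Dw) (hφ : TestForm φ) (M : Module.End ℂ (GF n))
    (j : Fin n) :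
    HasWeakPD j (fun x => M (w x) ⬝ᵥ φ x)
      fun x => leibniz (w x) (Dw j x) (φ x) (Dcl φ j x) M := by
  have hwM := hw.map M
  have hlocInt {u ψ : Pt n → ℂ} (hu : L2loc u) (hψ : IsTest ψ) :
      LocallyIntegrable (fun x => u x * ψ x) volume :=
    (integrable_mul_of_hasCompactSupport hu.locallyIntegrable hψ.continuous hψ.2).locallyIntegrable
  simp only [leibniz_apply, dotProduct, ← sum_add_distrib]
  exact .sum (fun S => (hwM.2.1 j S).mul_test (hwM.1 S).locallyIntegrable
      (hwM.2.2 j S).locallyIntegrable (hφ S)) (fun S => hlocInt (hwM.1 S) (hφ S))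
    fun S => (hlocInt (hwM.2.2 j S) (hφ S)).add (hlocInt (hwM.1 S) ((hφ S).pd j))

lemma integrable_continuous_mul_leibniz (hw : H1locWith w Dw) (hφ : TestForm φ) {c : Pt n → ℂ}
    (hc : Continuous c) (M : Module.End ℂ (GF n)) (j : Fin n) :
    Integrable (fun x => c x * leibniz (w x) (Dw j x) (φ x) (Dcl φ j x) M) volume := by
  simp only [leibniz_apply, mul_add]
  exact (((hw.l2locForm_weakPD j).map M).integrable_continuous_mul_dotProduct hφ hc).add
    ((hw.l2locForm.map M).integrable_continuous_mul_dotProduct (hφ.dcl j) hc)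

lemma locallyIntegrable_leibniz (hw : H1locWith w Dw) (hφ : TestForm φ)
    (M : Module.End ℂ (GF n)) (j : Fin n) :
    LocallyIntegrable (fun x => leibniz (w x) (Dw j x) (φ x) (Dcl φ j x) M) volume := by
  simpa only [one_mul] using
    (hw.integrable_continuous_mul_leibniz hφ (continuous_const (y := 1)) M j).locallyIntegrable

end H1locWith

lemma TestForm.exists_eq_zero_of_notMem_ball {φ : Form n} (hφ : TestForm φ) :
    ∃ r, ∀ x ∉ Metric.ball (0 : Pt n) r, φ x = 0 ∧ ∀ j, Dcl φ j x = 0 := by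
  obtain ⟨r, hr⟩ := (isCompact_iUnion fun S => (hφ S).2).isBounded.subset_ball (0 : Pt n)
  refine ⟨r, fun x hx => ?_⟩
  have hx' (S : Finset (Fin n)) : x ∉ tsupport fun y => φ y S :=
    fun h => hx (hr (Set.mem_iUnion_of_mem S h))
  exact ⟨funext fun S => image_eq_zero_of_notMem_tsupport (f := fun y => φ y S) (hx' S),
    fun j => funext fun S => image_eq_zero_of_notMem_tsupport (f := pd j fun y => φ y S)
      fun h => hx' S (tsupport_pd_subset _ j h)⟩

namespace H1locWith

variable {w φ : Form n} {Dw : Fin n → Form n} {c : Pt n → ℂ}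

lemma integral_contDiff_mul_leibniz (hw : H1locWith w Dw) (hφ : TestForm φ)
    (hc : ContDiff ℝ 1 c) (M : Module.End ℂ (GF n)) (j : Fin n) :
    ∫ x, c x * leibniz (w x) (Dw j x) (φ x) (Dcl φ j x) M
      = -∫ x, pd j c x * (M (w x) ⬝ᵥ φ x) := by
  obtain ⟨r, hr⟩ := hφ.exists_eq_zero_of_notMem_ball
  refine (hw.hasWeakPD_dotProduct hφ M j).integral_contDiff_mul (r := r)
    ((hw.l2locForm.map M).integrable_dotProduct hφ).locallyIntegrable
    (hw.locallyIntegrable_leibniz hφ M j) (fun x hx => ?_) (fun x hx => ?_) hc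
  · rw [(hr x hx).1, dotProduct_zero]
  · rw [leibniz_apply, (hr x hx).1, (hr x hx).2, dotProduct_zero, dotProduct_zero, add_zero]

lemma integral_pd_mul_leibniz_comm (hw : H1locWith w Dw) (hφ : TestForm φ)
    (hc : ContDiff ℝ 1 c) (M : Module.End ℂ (GF n)) (j k : Fin n) :
    ∫ x, pd k c x * leibniz (w x) (Dw j x) (φ x) (Dcl φ j x) M
      = ∫ x, pd j c x * leibniz (w x) (Dw k x) (φ x) (Dcl φ k x) M := by
  obtain ⟨r, hr⟩ := hφ.exists_eq_zero_of_notMem_ball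
  have hzero (i : Fin n) : ∀ x ∉ Metric.ball (0 : Pt n) r,
      leibniz (w x) (Dw i x) (φ x) (Dcl φ i x) M = 0 := fun x hx => by
    rw [leibniz_apply, (hr x hx).1, (hr x hx).2, dotProduct_zero, dotProduct_zero, add_zero]
  exact (hw.hasWeakPD_dotProduct hφ M j).integral_pd_mul_comm (hw.hasWeakPD_dotProduct hφ M k)
    (hw.locallyIntegrable_leibniz hφ M j) (hw.locallyIntegrable_leibniz hφ M k) (hzero j)
    (hzero k) hc

lemma integral_dotProduct_dcl_comm (hw : H1locWith w Dw) (hφ : TestForm φ)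
    (M : Module.End ℂ (GF n)) (j k : Fin n) :
    ∫ x, M (Dw j x) ⬝ᵥ Dcl φ k x = ∫ x, M (Dw k x) ⬝ᵥ Dcl φ j x := by
  have hwM := hw.map M
  have hint (i l : Fin n) (S : Finset (Fin n)) :
      Integrable (fun x => M (Dw i x) S * Dcl φ l x S) volume :=
    integrable_mul_of_hasCompactSupport (hwM.2.2 i S).locallyIntegrable (hφ.dcl l S).continuous
      (hφ.dcl l S).2
  simp only [dotProduct]
  rw [integral_finsetSum _ fun S _ => hint j k S, integral_finsetSum _ fun S _ => hint k j S]
  exact sum_congr rfl fun S _ => (hwM.2.1 j S).integral_mul_pd_comm (hwM.2.1 k S) (hφ S)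

end H1locWith

/-! ### Elliptic regularity for the Laplacian -/

section Sobolev

open scoped SchwartzMap LineDeriv Laplacian
open TemperedDistribution

variable {E : Type*} [NormedAddCommGroup E] [InnerProductSpace ℝ E] [FiniteDimensional ℝ E]
  [MeasurableSpace E] [BorelSpace E] {ι : Type*} [Fintype ι]

lemma besselPotential_two (f : 𝓢'(E, ℂ)) :
    besselPotential E ℂ 2 f = f + (-(((2 * Real.pi) ^ 2)⁻¹ : ℝ) : ℂ) • Δ f := by
  have hsymbol : (fun x : E => (((1 + ‖x‖ ^ 2) ^ ((2 : ℝ) / 2) : ℝ) : ℂ))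
      = (fun _ => (1 : ℂ)) + fun x : E => ((‖x‖ ^ 2 : ℝ) : ℂ) := by
    ext x
    simp
  have hone : fourierMultiplierCLM ℂ (fun _ : E => (1 : ℂ)) f = f := by simp
  have hadd : fourierMultiplierCLM ℂ ((fun _ => (1 : ℂ)) + fun x : E => ((‖x‖ ^ 2 : ℝ) : ℂ)) f
      = f + fourierMultiplierCLM ℂ (fun x : E => ((‖x‖ ^ 2 : ℝ) : ℂ)) f := by
    conv_rhs => rw [← hone]
    simp only [fourierMultiplierCLM_apply]
    rw [smulLeftCLM_add (by fun_prop) (by fun_prop)]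
    simp [FourierTransform.fourierInv_add]
  rw [laplacian_eq_fourierMultiplierCLM, besselPotential, hsymbol, hadd]
  congr 1
  ext ψ
  simp [Complex.ofReal_ne_zero.2 Real.pi_ne_zero]

lemma memSobolev_one_of_laplacian_eq (e : ι → E) (f G₀ : Lp ℂ 2 (volume : Measure E))
    (G : ι → Lp ℂ 2 (volume : Measure E))
    (h : Δ (f : 𝓢'(E, ℂ)) = ∑ k, ∂_{e k} (G k : 𝓢'(E, ℂ)) + (G₀ : 𝓢'(E, ℂ))) :
    MemSobolev 1 2 (f : 𝓢'(E, ℂ)) := by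
  classical
  have hzero (g : Lp ℂ 2 (volume : Measure E)) : MemSobolev 0 2 (g : 𝓢'(E, ℂ)) :=
    memSobolev_zero_iff.2 ⟨g, rfl⟩
  have hdiv (s : Finset ι) : MemSobolev (-1) 2 (∑ k ∈ s, ∂_{e k} (G k : 𝓢'(E, ℂ))) := by
    induction s using Finset.induction_on with
    | empty => simp
    | insert a s ha ih =>
      rw [Finset.sum_insert ha]
      exact .add (by simpa using (hzero (G a)).lineDerivOp (m := e a)) ih
  have hbessel : MemSobolev (-1) 2 (besselPotential E ℂ 2 (f : 𝓢'(E, ℂ))) := by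
    rw [besselPotential_two, h]
    exact ((hzero f).mono (by norm_num)).add
      (((hdiv _).add ((hzero G₀).mono (by norm_num))).smul _)
  rw [memSobolev_besselPotential_iff] at hbessel
  norm_num at hbessel
  exact hbessel

lemma exists_lp_lineDeriv_of_laplacian_eq (e : ι → E) (f G₀ : Lp ℂ 2 (volume : Measure E))
    (G : ι → Lp ℂ 2 (volume : Measure E))
    (h : ∀ ψ : 𝓢(E, ℂ), ∫ x, (Δ ψ x * f x + ∑ k, (∂_{e k} ψ) x * G k x - ψ x * G₀ x) = 0)
    (v : E) :
    ∃ g : Lp ℂ 2 (volume : Measure E), ∀ ψ : 𝓢(E, ℂ),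
      ∫ x, ψ x * g x = -∫ x, (∂_{v} ψ) x * f x := by
  have hint (ψ : 𝓢(E, ℂ)) (g : Lp ℂ 2 (volume : Measure E)) :
      Integrable (fun x => ψ x * g x) volume :=
    (ψ.memLp 2).integrable_mul (Lp.memLp g)
  have hsobolev : MemSobolev 1 2 (f : 𝓢'(E, ℂ)) := by
    refine memSobolev_one_of_laplacian_eq e f G₀ G ?_
    ext ψ
    have hψ := h ψ
    have hsum : Integrable (fun x => ∑ k, (∂_{e k} ψ) x * G k x) volume :=
      integrable_finsetSum _ fun k _ => hint _ (G k)
    have hadd : Integrable (fun x => Δ ψ x * f x + ∑ k, (∂_{e k} ψ) x * G k x) volume :=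
      (hint _ f).add hsum
    rw [integral_sub hadd (hint ψ G₀), integral_add (hint _ f) hsum,
      integral_finsetSum _ fun k _ => hint _ (G k)] at hψ
    rw [laplacian_apply_apply, Lp.toTemperedDistribution_apply]
    simp only [smul_eq_mul]
    simp [integral_neg]
    linear_combination hψ
  have hderiv := hsobolev.lineDerivOp (m := v)
  norm_num at hderiv
  obtain ⟨g, hg⟩ := memSobolev_zero_iff.1 hderiv
  refine ⟨g, fun ψ => ?_⟩
  have hψ := congrArg (fun T : 𝓢'(E, ℂ) => T ψ) hg
  simp only [lineDerivOp_apply_apply, Lp.toTemperedDistribution_apply, smul_eq_mul] at hψ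
  rw [← hψ, ← integral_neg]
  simp

lemma pd_schwartz_comp_toLp (ψ : 𝓢(EuclideanSpace ℝ (Fin n), ℂ)) (k : Fin n) :
    pd k (fun y : Pt n => ψ (WithLp.toLp 2 y))
      = fun y => (∂_{EuclideanSpace.single k (1 : ℝ)} ψ) (WithLp.toLp 2 y) := by
  ext x
  have hcomp := (ψ.differentiable (WithLp.toLp 2 x)).hasFDerivAt.comp x
    ((EuclideanSpace.equiv (Fin n) ℝ).symm.toContinuousLinearMap.hasFDerivAt (x := x))
  have hfderiv : fderiv ℝ (fun y : Pt n => ψ (WithLp.toLp 2 y)) x = _ := hcomp.fderiv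
  rw [pd, hfderiv, SchwartzMap.lineDerivOp_apply_eq_fderiv]
  rfl

lemma sum_pd_pd_schwartz_comp_toLp (ψ : 𝓢(EuclideanSpace ℝ (Fin n), ℂ)) (x : Pt n) :
    ∑ k, pd k (pd k fun y : Pt n => ψ (WithLp.toLp 2 y)) x = Δ ψ (WithLp.toLp 2 x) := by
  simp only [pd_schwartz_comp_toLp]
  rw [SchwartzMap.laplacian_eq_sum (EuclideanSpace.basisFun (Fin n) ℝ)]
  simp only [_root_.sum_apply, EuclideanSpace.basisFun_apply]

lemma integral_comp_toLp (f : EuclideanSpace ℝ (Fin n) → ℂ) :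
    ∫ x : Pt n, f (WithLp.toLp 2 x) = ∫ y, f y :=
  (PiLp.volume_preserving_toLp (Fin n)).integral_comp
    (MeasurableEquiv.toLp 2 (Fin n → ℝ)).measurableEmbedding f

end Sobolev

open scoped SchwartzMap LineDeriv Laplacian in
lemma exists_memLp_weakPD_of_laplacian_eq {f G₀ : Pt n → ℂ} {G : Fin n → Pt n → ℂ}
    (hf : MemLp f 2 volume) (hG₀ : MemLp G₀ 2 volume) (hG : ∀ k, MemLp (G k) 2 volume)
    (h : ∀ ψ : Pt n → ℂ, ContDiff ℝ (⊤ : ℕ∞) ψ →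
      ∫ x, ((∑ k, pd k (pd k ψ) x) * f x + ∑ k, pd k ψ x * G k x - ψ x * G₀ x) = 0)
    (j : Fin n) : ∃ g : Pt n → ℂ, MemLp g 2 volume ∧ HasWeakPD j f g := by
  have hL {u : Pt n → ℂ} (hu : MemLp u 2 volume) :
      MemLp (fun x : EuclideanSpace ℝ (Fin n) => u x.ofLp) 2 volume :=
    hu.comp_measurePreserving (PiLp.volume_preserving_ofLp (Fin n))
  obtain ⟨g, hg⟩ := exists_lp_lineDeriv_of_laplacian_eq
    (fun k : Fin n => EuclideanSpace.single k (1 : ℝ)) ((hL hf).toLp _) ((hL hG₀).toLp _)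
    (fun k => (hL (hG k)).toLp _) (fun ψ => by
      have hψ := h (fun y => ψ (WithLp.toLp 2 y))
        ((ψ.smooth _).comp (EuclideanSpace.equiv (Fin n) ℝ).symm.contDiff)
      simp only [sum_pd_pd_schwartz_comp_toLp] at hψ
      simp only [pd_schwartz_comp_toLp] at hψ
      rw [← hψ, ← integral_comp_toLp]
      refine integral_congr_ae ?_
      have hmp := (PiLp.volume_preserving_toLp (Fin n)).quasiMeasurePreserving
      filter_upwards [hmp.ae (hL hf).coeFn_toLp, hmp.ae (hL hG₀).coeFn_toLp,
        hmp.ae (ae_all_iff.2 fun k => (hL (hG k)).coeFn_toLp)] with x hxf hxG₀ hxG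
      simp only [hxf, hxG₀, hxG]) (EuclideanSpace.single j (1 : ℝ))
  refine ⟨fun x => g (WithLp.toLp 2 x),
    (Lp.memLp g).comp_measurePreserving (PiLp.volume_preserving_toLp (Fin n)), fun φ hφ => ?_⟩
  let φS : 𝓢(EuclideanSpace ℝ (Fin n), ℂ) := HasCompactSupport.toSchwartzMap
    (hφ.2.comp_homeomorph (EuclideanSpace.equiv (Fin n) ℝ).toHomeomorph)
    (hφ.1.comp (EuclideanSpace.equiv (Fin n) ℝ).contDiff)
  have hpd : pd j φ = fun x => (∂_{EuclideanSpace.single j (1 : ℝ)} φS) (WithLp.toLp 2 x) :=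
    pd_schwartz_comp_toLp φS j
  calc ∫ x, g (WithLp.toLp 2 x) * φ x = ∫ x : Pt n, φS (WithLp.toLp 2 x) * g (WithLp.toLp 2 x) :=
        integral_congr_ae (.of_forall fun x => mul_comm _ _)
    _ = ∫ y, φS y * g y := integral_comp_toLp fun y => φS y * g y
    _ = -∫ y, (∂_{EuclideanSpace.single j (1 : ℝ)} φS) y * (hL hf).toLp _ y := hg φS
    _ = -∫ x, f x * pd j φ x := by
      rw [← integral_comp_toLp]
      refine congrArg Neg.neg (integral_congr_ae ?_)
      have hmp := (PiLp.volume_preserving_toLp (Fin n)).quasiMeasurePreserving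
      filter_upwards [hmp.ae (hL hf).coeFn_toLp] with x hx
      rw [hx, hpd, mul_comm]

lemma pd_pd_mul {χ ψ : Pt n → ℂ} (hχ : ContDiff ℝ (⊤ : ℕ∞) χ) (hψ : ContDiff ℝ (⊤ : ℕ∞) ψ)
    (k : Fin n) (x : Pt n) : pd k (pd k fun y => χ y * ψ y) x
      = pd k (pd k χ) x * ψ x + 2 * (pd k χ x * pd k ψ x) + χ x * pd k (pd k ψ) x := by
  have hdiff {f : Pt n → ℂ} (hf : ContDiff ℝ (⊤ : ℕ∞) f) : Differentiable ℝ f :=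
    hf.differentiable (by simp)
  have hχ' := contDiff_pd hχ k
  have hψ' := contDiff_pd hψ k
  rw [show pd k (fun y => χ y * ψ y) = fun y => pd k χ y * ψ y + χ y * pd k ψ y from
      funext (pd_mul (hdiff hχ) (hdiff hψ) k),
    pd_add (f := fun y => pd k χ y * ψ y) (g := fun y => χ y * pd k ψ y)
      (hdiff (hχ'.mul hψ)) (hdiff (hχ.mul hψ')), pd_mul (hdiff hχ') (hdiff hψ),
    pd_mul (hdiff hχ) (hdiff hψ')]
  ring

lemma exists_memLp_weakPD_test_mul {u : Pt n → ℂ} {F : Fin n → Pt n → ℂ} (hu : L2loc u)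
    (hF : ∀ k, L2loc (F k))
    (h : ∀ θ, IsTest θ → ∫ x, (u x * ∑ k, pd k (pd k θ) x - ∑ k, F k x * pd k θ x) = 0)
    {χ : Pt n → ℂ} (hχ : IsTest χ) (j : Fin n) :
    ∃ g, MemLp g 2 volume ∧ HasWeakPD j (fun x => χ x * u x) g := by
  refine exists_memLp_weakPD_of_laplacian_eq
    (G₀ := fun x => ∑ k, (pd k χ x * F k x - pd k (pd k χ) x * u x))
    (G := fun k x => 2 * (pd k χ x * u x) - χ x * F k x) (hu.memLp_test_mul hχ)
    (memLp_finsetSum _ fun k _ =>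
      ((hF k).memLp_test_mul (hχ.pd k)).sub (hu.memLp_test_mul ((hχ.pd k).pd k)))
    (fun k => ((hu.memLp_test_mul (hχ.pd k)).const_mul 2).sub ((hF k).memLp_test_mul hχ))
    (fun ψ hψ => ?_) j
  rw [← h _ (hχ.mul_contDiff hψ)]
  refine integral_congr_ae (.of_forall fun x => ?_)
  simp only [pd_pd_mul hχ.1 hψ, pd_mul hχ.differentiable (hψ.differentiable (by simp)),
    mul_sum, sum_mul, ← sum_add_distrib, ← sum_sub_distrib]
  exact sum_congr rfl fun k _ => by ring

lemma HasWeakPD.ae_eq_of_eqOn {f₁ f₂ g₁ g₂ : Pt n → ℂ} {j : Fin n} {U : Set (Pt n)}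
    (hU : IsOpen U) (h₁ : HasWeakPD j f₁ g₁) (h₂ : HasWeakPD j f₂ g₂)
    (hg₁ : LocallyIntegrable g₁ volume) (hg₂ : LocallyIntegrable g₂ volume)
    (hf : Set.EqOn f₁ f₂ U) : ∀ᵐ x, x ∈ U → g₁ x = g₂ x := by
  have hzero := hU.ae_eq_zero_of_integral_contDiff_smul_eq_zero (μ := volume)
    (f := fun x => g₁ x - g₂ x) ((hg₁.sub hg₂).locallyIntegrableOn _) fun p hp hc hs => by
      have hφ : IsTest fun x => (p x : ℂ) := .ofReal hp hc
      have hpd (x : Pt n) (hx : x ∉ U) : pd j (fun y => (p y : ℂ)) x = 0 :=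
        image_eq_zero_of_notMem_tsupport fun h => hx <| hs <|
          closure_mono (fun y => by simp) (tsupport_pd_subset _ j h)
      have heq : ∫ x, g₁ x * (p x : ℂ) = ∫ x, g₂ x * (p x : ℂ) := by
        rw [h₁ _ hφ, h₂ _ hφ]
        congr 2
        ext x
        by_cases hx : x ∈ U
        · rw [hf hx]
        · rw [hpd x hx, mul_zero, mul_zero]
      have hsub := integral_sub (integrable_mul_of_hasCompactSupport hg₁ hφ.continuous hφ.2)
        (integrable_mul_of_hasCompactSupport hg₂ hφ.continuous hφ.2)
      rw [heq, sub_self] at hsub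
      simpa only [Complex.real_smul, mul_comm, mul_sub] using hsub
  filter_upwards [hzero] with x hx hxU
  exact sub_eq_zero.1 (hx hxU)

lemma exists_subset_ball_nat {K : Set (Pt n)} (hK : IsCompact K) :
    ∃ N : ℕ, K ⊆ Metric.ball (0 : Pt n) N := by
  obtain ⟨r, hr⟩ := hK.isBounded.subset_ball (0 : Pt n)
  obtain ⟨N, hN⟩ := exists_nat_ge r
  exact ⟨N, hr.trans (Metric.ball_subset_ball hN)⟩

lemma exists_l2loc_ae_eq_on_balls {g : ℕ → Pt n → ℂ} (hg : ∀ N, L2loc (g N))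
    (hcomp : ∀ N M : ℕ, N ≤ M → ∀ᵐ x, x ∈ Metric.ball (0 : Pt n) N → g N x = g M x) :
    ∃ G, L2loc G ∧ ∀ M : ℕ, ∀ᵐ x, x ∈ Metric.ball (0 : Pt n) M → G x = g M x := by
  have hG (M : ℕ) :
      ∀ᵐ x, x ∈ Metric.ball (0 : Pt n) M → g (⌊‖x‖⌋₊ + 1) x = g M x := by
    filter_upwards [ae_all_iff.2 fun N => ae_all_iff.2 (hcomp N M)] with x hx hxM
    rw [mem_ball_zero_iff] at hxM
    refine hx _ (Nat.succ_le_of_lt ((Nat.floor_lt (norm_nonneg x)).2 hxM)) ?_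
    simpa using Nat.lt_floor_add_one ‖x‖
  have hres (M : ℕ) := (ae_restrict_iff' (measurableSet_ball (x := (0 : Pt n)))).2 (hG M)
  refine ⟨fun x => g (⌊‖x‖⌋₊ + 1) x, .of_memLp ?_ fun K hK => ?_, hG⟩
  · rw [← Measure.restrict_univ (μ := volume), ← Metric.iUnion_ball_nat (0 : Pt n)]
    exact AEStronglyMeasurable.iUnion fun M =>
      (hg M).1.restrict.congr (Filter.EventuallyEq.symm (hres M))
  · obtain ⟨M, hM⟩ := exists_subset_ball_nat hK
    exact ((hg M).memLp hK).ae_eq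
      (Filter.EventuallyEq.symm (ae_restrict_of_ae_restrict_of_subset hM (hres M)))

lemma exists_l2loc_weakPD_of_test_mul {u : Pt n → ℂ} {j : Fin n}
    (h : ∀ χ, IsTest χ → ∃ g, MemLp g 2 volume ∧ HasWeakPD j (fun x => χ x * u x) g) :
    ∃ g, HasWeakPD j u g ∧ L2loc g := by
  choose χ hχ hχ1 using exists_isTest_eq_one_on_ball (n := n)
  choose g hgm hgw using fun N : ℕ => h (χ N) (hχ N)
  have hg (N : ℕ) : L2loc (g N) := .of_memLp (hgm N).1 fun K _ => (hgm N).restrict K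
  obtain ⟨G, hG, hGg⟩ := exists_l2loc_ae_eq_on_balls hg fun N M hNM =>
    (hgw N).ae_eq_of_eqOn Metric.isOpen_ball (hgw M) (hg N).locallyIntegrable
      (hg M).locallyIntegrable fun x hx => by
        simp only [hχ1 N x hx, hχ1 M x (Metric.ball_subset_ball (Nat.cast_le.2 hNM) hx)]
  refine ⟨G, fun φ hφ => ?_, hG⟩
  obtain ⟨M, hM⟩ := exists_subset_ball_nat hφ.2
  calc ∫ x, G x * φ x = ∫ x, g M x * φ x := by
        refine integral_congr_ae ?_
        filter_upwards [hGg M] with x hx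
        by_cases hxφ : x ∈ tsupport φ
        · rw [hx (hM hxφ)]
        · rw [image_eq_zero_of_notMem_tsupport hxφ, mul_zero, mul_zero]
    _ = -∫ x, χ M x * u x * pd j φ x := hgw M φ hφ
    _ = -∫ x, u x * pd j φ x := by
        congr 2
        ext x
        by_cases hxφ : x ∈ tsupport φ
        · rw [hχ1 M x (hM hxφ), one_mul]
        · rw [image_eq_zero_of_notMem_tsupport fun h => hxφ (tsupport_pd_subset φ j h), mul_zero,
            mul_zero]

lemma exists_l2loc_weakPD_of_laplacian_eq {u : Pt n → ℂ} {F : Fin n → Pt n → ℂ} (hu : L2loc u)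
    (hF : ∀ k, L2loc (F k))
    (h : ∀ θ, IsTest θ → ∫ x, (u x * ∑ k, pd k (pd k θ) x - ∑ k, F k x * pd k θ x) = 0)
    (j : Fin n) : ∃ g, HasWeakPD j u g ∧ L2loc g :=
  exists_l2loc_weakPD_of_test_mul fun _ hχ => exists_memLp_weakPD_test_mul hu hF h hχ j

/-! ### The factorization of the second order operator -/

lemma sum_sum_eq_zero_of_antisymm {f : Fin n → Fin n → ℂ} (hf : ∀ j k, f j k = -f k j) :
    ∑ j, ∑ k, f j k = 0 := by
  have h : ∑ j, ∑ k, f j k = -∑ j, ∑ k, f j k := by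
    conv_rhs => rw [sum_comm]
    simp only [← sum_neg_distrib, ← hf]
  exact self_eq_neg.1 h

lemma IsTest.sum_mul_const {ι : Type*} [Fintype ι] {φ : ι → Pt n → ℂ} (hφ : ∀ i, IsTest (φ i))
    (c : ι → ℂ) : IsTest fun x => ∑ i, φ i x * c i := by
  refine ⟨.sum fun i _ => (hφ i).1.mul contDiff_const, ?_⟩
  simpa only [Finset.sum_fn] using
    HasCompactSupport.finset_sum (s := univ) (f := fun i x => φ i x * c i)
      fun i _ => (hφ i).2.mul_right

lemma TestForm.map {φ : Form n} (hφ : TestForm φ) (M : Module.End ℂ (GF n)) :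
    TestForm fun x => M (φ x) := fun S => by
  simpa only [end_apply_eq_sum M (φ _), mul_comm] using IsTest.sum_mul_const hφ _

namespace H1locWith

variable {w φ : Form n} {Dw : Fin n → Form n} {a b c : Pt n → ℂ}

lemma integral_sum_dotProduct_dcl_eq_zero (hw : H1locWith w Dw) (hφ : TestForm φ)
    {M : Fin n → Fin n → Module.End ℂ (GF n)} (hM : ∀ j k, M j k = -M k j) :
    ∫ x, ∑ j, ∑ k, M j k (Dw j x) ⬝ᵥ Dcl φ k x = 0 := by
  have hint (j k : Fin n) : Integrable (fun x => M j k (Dw j x) ⬝ᵥ Dcl φ k x) volume :=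
    ((hw.l2locForm_weakPD j).map _).integrable_dotProduct (hφ.dcl k)
  rw [integral_finsetSum _ fun j _ => integrable_finsetSum _ fun k _ => hint j k]
  simp only [integral_finsetSum univ fun k _ => hint _ k]
  refine sum_sum_eq_zero_of_antisymm fun j k => ?_
  rw [hw.integral_dotProduct_dcl_comm hφ, hM j k, ← integral_neg]
  simp only [LinearMap.neg_apply, neg_dotProduct]

lemma integral_sum_pd_mul_leibniz_eq_zero (hw : H1locWith w Dw) (hφ : TestForm φ)
    (hc : ContDiff ℝ 1 c) {M : Fin n → Fin n → Module.End ℂ (GF n)}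
    (hM : ∀ j k, M j k = -M k j) :
    ∫ x, ∑ j, ∑ k, pd j c x * leibniz (w x) (Dw k x) (φ x) (Dcl φ k x) (M j k) = 0 := by
  have hint (j k : Fin n) := hw.integrable_continuous_mul_leibniz hφ (continuous_pd hc j) (M j k) k
  rw [integral_finsetSum _ fun j _ => integrable_finsetSum _ fun k _ => hint j k]
  simp only [integral_finsetSum univ fun k _ => hint _ k]
  refine sum_sum_eq_zero_of_antisymm fun j k => ?_
  rw [hw.integral_pd_mul_leibniz_comm hφ hc, hM j k, ← integral_neg]
  simp only [map_neg, mul_neg]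

lemma integral_gd_dotProduct_gdel (hw : H1locWith w Dw) (hφ : TestForm φ) :
    ∫ x, (gd fun j => Dw j x) ⬝ᵥ gdel (fun j => Dcl φ j x) = 0 := by
  rw [← hw.integral_sum_dotProduct_dcl_eq_zero hφ (M := fun j k => extMul j * extMul k)
    extMul_mul_extMul]
  congr 1 with x
  rw [gd_eq, gdel_eq, dotProduct_neg, dotProduct_sum, sum_comm, ← sum_neg_distrib]
  refine sum_congr rfl fun k _ => ?_
  rw [sum_dotProduct, ← sum_neg_distrib]
  refine sum_congr rfl fun j _ => ?_
  rw [extMul_mul_extMul, LinearMap.neg_apply, neg_dotProduct, Module.End.mul_apply,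
    extMul_dotProduct k]

lemma integral_gdel_dotProduct_gd (hw : H1locWith w Dw) (hφ : TestForm φ) :
    ∫ x, (gdel fun j => Dw j x) ⬝ᵥ gd (fun j => Dcl φ j x) = 0 := by
  rw [← hw.integral_sum_dotProduct_dcl_eq_zero hφ (M := fun j k => intMul j * intMul k)
    intMul_mul_intMul]
  congr 1 with x
  rw [gd_eq, gdel_eq, neg_dotProduct, dotProduct_sum, sum_comm, ← sum_neg_distrib]
  refine sum_congr rfl fun k _ => ?_
  rw [sum_dotProduct, ← sum_neg_distrib]
  refine sum_congr rfl fun j _ => ?_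
  rw [intMul_mul_intMul, LinearMap.neg_apply, neg_dotProduct, Module.End.mul_apply,
    intMul_dotProduct k]

lemma integrable_dotProduct_dcl_sum (hw : H1locWith w Dw) (hφ : TestForm φ)
    (M N : Fin n → Module.End ℂ (GF n)) :
    Integrable (fun x => (∑ j, M j (Dw j x)) ⬝ᵥ (∑ k, N k (Dcl φ k x))) volume := by
  simp only [dotProduct_sum]
  exact integrable_finsetSum _ fun k _ =>
    (L2locForm.sum fun j => (hw.l2locForm_weakPD j).map (M j)).integrable_dotProduct
      ((hφ.dcl k).map (N k))

lemma integrable_gdel_dotProduct_add_gd_dotProduct (hw : H1locWith w Dw) (hφ : TestForm φ) :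
    Integrable (fun x => (gdel fun j => Dw j x) ⬝ᵥ (gdel fun j => Dcl φ j x)
      + (gd fun j => Dw j x) ⬝ᵥ (gd fun j => Dcl φ j x)) volume := by
  simp only [gdel_eq, gd_eq, neg_dotProduct_neg]
  exact (hw.integrable_dotProduct_dcl_sum hφ intMul intMul).add
    (hw.integrable_dotProduct_dcl_sum hφ extMul extMul)

lemma integral_clifford_dotProduct (hw : H1locWith w Dw) (hφ : TestForm φ) :
    ∫ x, (∑ j, cliffordNeg j (Dw j x)) ⬝ᵥ (∑ k, cliffordNeg k (Dcl φ k x))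
      = ∫ x, ((gdel fun j => Dw j x) ⬝ᵥ (gdel fun j => Dcl φ j x)
          + (gd fun j => Dw j x) ⬝ᵥ (gd fun j => Dcl φ j x)) := by
  have hgdel (D : Fin n → GF n) : gdel D = ∑ j, (-intMul j) (D j) := by
    simp only [gdel_eq, LinearMap.neg_apply, sum_neg_distrib]
  have hint := hw.integrable_dotProduct_dcl_sum hφ
  have hdd := hint extMul extMul
  have hdδ := hint extMul fun j => -intMul j
  have hδd := hint (fun j => -intMul j) extMul
  have hδδ := hint (fun j => -intMul j) fun j => -intMul j
  simp only [← gd_eq, ← hgdel] at hdd hdδ hδd hδδ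
  simp only [← gd_add_gdel, add_dotProduct, dotProduct_add]
  rw [integral_add (by exact hdd.add hδd) (by exact hdδ.add hδδ), integral_add hdd hδd,
    integral_add hdδ hδδ, integral_add hδδ hdd, hw.integral_gd_dotProduct_gdel hφ,
    hw.integral_gdel_dotProduct_gd hφ]
  ring

lemma integrable_sum_pd_mul_leibniz (hw : H1locWith w Dw) (hφ : TestForm φ)
    (hc : ContDiff ℝ 1 c) (M : Fin n → Fin n → Module.End ℂ (GF n)) :
    Integrable (fun x => ∑ j, ∑ k,
      pd j c x * leibniz (w x) (Dw k x) (φ x) (Dcl φ k x) (M j k)) volume :=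
  integrable_finsetSum _ fun j _ => integrable_finsetSum _ fun k _ =>
    hw.integrable_continuous_mul_leibniz hφ (continuous_pd hc j) (M j k) k

lemma integral_sum_leibniz_covectorMul (hw : H1locWith w Dw) (hφ : TestForm φ)
    (hc : ContDiff ℝ 1 c) (M : Module.End ℂ (GF n)) :
    ∫ x, ∑ k, leibniz (w x) (Dw k x) (φ x) (Dcl φ k x)
        (covectorMul (fun j => pd j c x) * cliffordNeg k * M)
      = ∫ x, ∑ j, ∑ k, pd j c x *
          leibniz (w x) (Dw k x) (φ x) (Dcl φ k x) (symmPart j k * M) := by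
  have halt (j k : Fin n) : (extMul j * extMul k - intMul j * intMul k) * M
      = -((extMul k * extMul j - intMul k * intMul j) * M) := by
    rw [← neg_mul (extMul k * extMul j - intMul k * intMul j) M, extMul_mul_extMul j k,
      intMul_mul_intMul j k]
    congr 1
    abel
  rw [← add_zero (∫ x, ∑ j, ∑ k, _), ← hw.integral_sum_pd_mul_leibniz_eq_zero hφ hc halt,
    ← integral_add (hw.integrable_sum_pd_mul_leibniz hφ hc _)
      (hw.integrable_sum_pd_mul_leibniz hφ hc _)]
  simp only [sum_leibniz_covectorMul, cliffordPos_mul_cliffordNeg_eq, add_mul, map_add, mul_add,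
    sum_add_distrib]

lemma integral_sum_leibniz_symbolP (hw : H1locWith w Dw) (hφ : TestForm φ)
    (hc : ContDiff ℝ 1 c) :
    ∫ x, ∑ k, (c x * leibniz (w x) (Dw k x) (φ x) (Dcl φ k x) (symbolP k)
        + pd k c x * (cliffordPos k (w x) ⬝ᵥ φ x))
      = ∫ x, 2 * ∑ k, pd k c x *
          ((extMul k (oddPart (w x)) + intMul k (evenPart (w x))) ⬝ᵥ φ x) := by
  have hleib (k : Fin n) := hw.integrable_continuous_mul_leibniz hφ hc.continuous (symbolP k) k
  have hpos (k : Fin n) :=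
    (hw.l2locForm.map (cliffordPos k)).integrable_continuous_mul_dotProduct hφ (continuous_pd hc k)
  have hsym (k : Fin n) := (hw.l2locForm.map (symbolP k)).integrable_continuous_mul_dotProduct hφ
    (continuous_pd hc k)
  have hright (k : Fin n) (x : Pt n) :
      2 * (pd k c x * ((extMul k (oddPart (w x)) + intMul k (evenPart (w x))) ⬝ᵥ φ x))
        = pd k c x * (cliffordPos k (w x) ⬝ᵥ φ x) - pd k c x * (symbolP k (w x) ⬝ᵥ φ x) := by
    rw [← mul_sub, ← sub_dotProduct, ← LinearMap.sub_apply, cliffordPos_sub_symbolP,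
      LinearMap.smul_apply, smul_dotProduct, smul_eq_mul, mul_left_comm]
    rfl
  simp only [mul_sum, hright]
  rw [integral_finsetSum _ fun k _ => by exact (hleib k).add (hpos k),
    integral_finsetSum _ fun k _ => by exact (hpos k).sub (hsym k)]
  refine sum_congr rfl fun k _ => ?_
  rw [integral_add (hleib k) (hpos k), integral_sub (hpos k) (hsym k),
    hw.integral_contDiff_mul_leibniz hφ hc]
  ring

theorem integral_diracP_dotProduct_diracP (hw : H1locWith w Dw) (hφ : TestForm φ)
    (ha : ContDiff ℝ 1 a) (hb : ContDiff ℝ 1 b) (hc : ContDiff ℝ 1 c)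
    (hcab : ∀ k x, pd k c x = c x * (pd k a x + pd k b x)) :
    ∫ x, diracP (fun j => pd j a x) (fun j => pd j b x) (c x) (fun j => Dw j x) (w x) ⬝ᵥ
        diracP (fun j => pd j a x) (fun j => pd j b x) (c x) (fun j => Dcl φ j x) (φ x)
      = (∫ x, ((gdel fun j => Dw j x) ⬝ᵥ (gdel fun j => Dcl φ j x)
          + (gd fun j => Dw j x) ⬝ᵥ (gd fun j => Dcl φ j x)))
        + ((∫ x, ∑ j, ∑ k, pd j b x *
              leibniz (w x) (Dw k x) (φ x) (Dcl φ k x) (symmPart j k * evenPart))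
            - ∫ x, ∑ j, ∑ k, pd j a x *
              leibniz (w x) (Dw k x) (φ x) (Dcl φ k x) (symmPart j k * oddPart))
        + (∫ x, 2 * ∑ k, pd k c x *
            ((extMul k (oddPart (w x)) + intMul k (evenPart (w x))) ⬝ᵥ φ x))
        + (∫ x, ((∑ j, pd j b x * pd j b x) • evenPart (w x)
            + (∑ j, pd j a x * pd j a x) • oddPart (w x)) ⬝ᵥ φ x)
        + ∫ x, c x * c x * (w x ⬝ᵥ φ x) := by
  have hprincipal := hw.integrable_dotProduct_dcl_sum hφ cliffordNeg cliffordNeg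
  have hfirst {f : Pt n → ℂ} (hf : ContDiff ℝ 1 f) (M : Module.End ℂ (GF n)) :
      Integrable (fun x => ∑ k, leibniz (w x) (Dw k x) (φ x) (Dcl φ k x)
        (covectorMul (fun j => pd j f x) * cliffordNeg k * M)) volume := by
    simpa only [sum_leibniz_covectorMul] using hw.integrable_sum_pd_mul_leibniz hφ hf _
  have hscalar : Integrable (fun x => ∑ k,
      (c x * leibniz (w x) (Dw k x) (φ x) (Dcl φ k x) (symbolP k)
        + pd k c x * (cliffordPos k (w x) ⬝ᵥ φ x))) volume :=
    integrable_finsetSum _ fun k _ =>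
      (hw.integrable_continuous_mul_leibniz hφ hc.continuous (symbolP k) k).add
        ((hw.l2locForm.map (cliffordPos k)).integrable_continuous_mul_dotProduct hφ
          (continuous_pd hc k))
  have hsq {f : Pt n → ℂ} (hf : ContDiff ℝ 1 f) :
      Continuous fun x => ∑ j, pd j f x * pd j f x :=
    continuous_finsetSum _ fun j _ => (continuous_pd hf j).mul (continuous_pd hf j)
  have hquad : Integrable (fun x => ((∑ j, pd j b x * pd j b x) • evenPart (w x)
      + (∑ j, pd j a x * pd j a x) • oddPart (w x)) ⬝ᵥ φ x) volume :=
    (((hw.l2locForm.map evenPart).smul (hsq hb)).add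
      ((hw.l2locForm.map oddPart).smul (hsq ha))).integrable_dotProduct hφ
  have hmass : Integrable (fun x => c x * c x * (w x ⬝ᵥ φ x)) volume :=
    hw.l2locForm.integrable_continuous_mul_dotProduct hφ (hc.continuous.mul hc.continuous)
  simp only [diracP_dotProduct_diracP, mul_sum_leibniz_symbolP_add, Pi.add_apply, ← hcab,
    zeroOrder_mul_symbolP, map_sub, sum_sub_distrib]
  have hfirst' := (hfirst hb evenPart).sub (hfirst ha oddPart)
  have hsum := (hprincipal.add hfirst').add hscalar
  rw [integral_add (by exact hsum.add hquad) hmass, integral_add (by exact hsum) hquad,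
    integral_add (by exact hprincipal.add hfirst') hscalar,
    integral_add hprincipal (by exact hfirst'), integral_sub (hfirst hb _) (hfirst ha _),
    hw.integral_clifford_dotProduct hφ,
    hw.integral_sum_leibniz_covectorMul hφ hb, hw.integral_sum_leibniz_covectorMul hφ ha,
    hw.integral_sum_leibniz_symbolP hφ hc]

end H1locWith

/-! ### Regularity of solutions of the first order system -/

/-- The test form `Σ_k ∂_kθ σ_k dx^S` with `σ_k = symbolP k`, mapped by `Σ_j σ_j ∂_j` to
`Δθ dx^S`. -/
def diracTest (θ : Pt n → ℂ) (S : Finset (Fin n)) : Form n :=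
  fun x => ∑ k, pd k θ x • symbolP k (Pi.single S 1)

lemma testForm_diracTest {θ : Pt n → ℂ} (hθ : IsTest θ) (S : Finset (Fin n)) :
    TestForm (diracTest θ S) := fun T => by
  simpa only [diracTest, Finset.sum_apply, Pi.smul_apply, smul_eq_mul] using
    IsTest.sum_mul_const (fun k => hθ.pd k) fun k => symbolP k (Pi.single S 1) T

lemma dcl_diracTest {θ : Pt n → ℂ} (hθ : IsTest θ) (S : Finset (Fin n)) (j : Fin n) (x : Pt n) :
    Dcl (diracTest θ S) j x = ∑ k, pd j (pd k θ) x • symbolP k (Pi.single S 1) := by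
  funext T
  simp only [Dcl, diracTest, Finset.sum_apply, Pi.smul_apply, smul_eq_mul]
  exact pd_sum_mul_const univ (fun k => (hθ.pd k).differentiable) _ j x

lemma sum_symbolP_dcl_diracTest {θ : Pt n → ℂ} (hθ : IsTest θ) (S : Finset (Fin n)) (x : Pt n) :
    ∑ j, symbolP j (Dcl (diracTest θ S) j x) = (∑ k, pd k (pd k θ) x) • Pi.single S 1 := by
  have h := sum_smul_mul_eq_of_anticomm (symbolP_mul_symbolP_add (n := n))
    (H := fun j k => pd j (pd k θ) x) fun j k => pd_comm hθ.1 j k x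
  simpa only [dcl_diracTest hθ, map_sum, map_smul, LinearMap.sum_apply, LinearMap.smul_apply,
    Module.End.mul_apply, Module.End.one_apply] using LinearMap.congr_fun h (Pi.single S (1 : ℂ))

theorem L2locForm.exists_l2loc_weakPD_of_symbolP {v F : Form n} (hv : L2locForm v)
    (hF : L2locForm F)
    (h : ∀ φ : Form n, TestForm φ →
      ∫ x, (v x ⬝ᵥ ∑ j, symbolP j (Dcl φ j x) - F x ⬝ᵥ φ x) = 0)
    (S : Finset (Fin n)) (j : Fin n) :
    ∃ g, HasWeakPD j (fun x => v x S) g ∧ L2loc g := by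
  refine exists_l2loc_weakPD_of_laplacian_eq (hv S) (fun k => (hF.map (symbolP k)) S)
    (fun θ hθ => ?_) j
  rw [← h (diracTest θ S) (testForm_diracTest hθ S)]
  congr 1 with x
  rw [sum_symbolP_dcl_diracTest hθ]
  simp only [diracTest, dotProduct_smul, dotProduct_sum, ← symbolP_dotProduct, dotProduct_single,
    mul_one, one_mul, smul_eq_mul, mul_comm (pd _ θ x), mul_comm (v x S)]

/-! ### The electromagnetic coefficients -/

lemma contDiff_clog_of_mem_slitPlane {f : Pt n → ℂ} (hf : ContDiff ℝ 1 f)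
    (hs : ∀ x, f x ∈ Complex.slitPlane) : ContDiff ℝ 1 fun x => Complex.log (f x) :=
  contDiff_iff_contDiffAt.2 fun x =>
    ((Complex.contDiffAt_log (hs x)).restrict_scalars ℝ).comp x hf.contDiffAt

lemma pd_cexp {f : Pt n → ℂ} (hf : Differentiable ℝ f) (j : Fin n) (x : Pt n) :
    pd j (fun y => Complex.exp (f y)) x = Complex.exp (f x) * pd j f x := by
  unfold pd
  rw [(hf x).hasFDerivAt.cexp.fderiv, smul_apply, smul_eq_mul]

lemma pd_const_mul {f : Pt n → ℂ} (hf : Differentiable ℝ f) (c : ℂ) (j : Fin n) (x : Pt n) :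
    pd j (fun y => c * f y) x = c * pd j f x := by
  unfold pd
  rw [fderiv_const_mul (hf x), smul_apply, smul_eq_mul]

lemma exp_half_log_mul_self {z : ℂ} (hz : z ≠ 0) :
    Complex.exp (1 / 2 * Complex.log z) * Complex.exp (1 / 2 * Complex.log z) = z := by
  rw [← Complex.exp_add, ← add_mul, add_halves, one_mul, Complex.exp_log hz]

namespace Coeffs

variable (C : Coeffs)

lemma γ_mem_slitPlane (x : Pt 3) : C.γ x ∈ Complex.slitPlane := by
  have hre : (C.γ x).re = C.εf x := by simp [γ]
  exact Or.inl (hre ▸ C.hε₀.trans_le (C.hεge x))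

lemma μf_mem_slitPlane (x : Pt 3) : (C.μf x : ℂ) ∈ Complex.slitPlane :=
  Complex.ofReal_mem_slitPlane.2 (C.hμ₀.trans_le (C.hμge x))

lemma contDiff_γ : ContDiff ℝ 1 C.γ :=
  (Complex.ofRealCLM.contDiff.comp C.hεC1).add
    ((contDiff_const.mul (Complex.ofRealCLM.contDiff.comp C.hσC1)).div_const _)

lemma contDiff_a : ContDiff ℝ 1 C.a :=
  contDiff_const.mul (contDiff_clog_of_mem_slitPlane C.contDiff_γ C.γ_mem_slitPlane)

lemma contDiff_b : ContDiff ℝ 1 C.b :=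
  contDiff_const.mul (contDiff_clog_of_mem_slitPlane (Complex.ofRealCLM.contDiff.comp C.hμC1)
    C.μf_mem_slitPlane)

lemma contDiff_sg : ContDiff ℝ 1 C.sg := C.contDiff_a.cexp

lemma contDiff_sm : ContDiff ℝ 1 C.sm := C.contDiff_b.cexp

lemma contDiff_c0 : ContDiff ℝ 1 C.c0 := (contDiff_const.mul C.contDiff_sg).mul C.contDiff_sm

lemma c0_mul_self (x : Pt 3) :
    C.c0 x * C.c0 x = -((C.ω : ℂ) ^ 2 * (C.γ x * (C.μf x : ℂ))) := by
  have hγ : C.sg x * C.sg x = C.γ x :=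
    exp_half_log_mul_self (Complex.slitPlane_ne_zero (C.γ_mem_slitPlane x))
  have hμ : C.sm x * C.sm x = (C.μf x : ℂ) :=
    exp_half_log_mul_self (Complex.slitPlane_ne_zero (C.μf_mem_slitPlane x))
  rw [← hγ, ← hμ, c0]
  linear_combination ((C.ω : ℂ) ^ 2 * C.sg x ^ 2 * C.sm x ^ 2) * Complex.I_mul_I

lemma pd_c0_eq_pd_sg_mul_sm (j : Fin 3) (x : Pt 3) :
    pd j C.c0 x = Complex.I * C.ω * pd j (fun y => C.sg y * C.sm y) x := by
  rw [← pd_const_mul ((C.contDiff_sg.mul C.contDiff_sm).differentiable one_ne_zero)]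
  simp only [← mul_assoc]
  rfl

lemma pd_c0 (j : Fin 3) (x : Pt 3) : pd j C.c0 x = C.c0 x * (pd j C.a x + pd j C.b x) := by
  have ha : pd j C.sg x = C.sg x * pd j C.a x :=
    pd_cexp (C.contDiff_a.differentiable one_ne_zero) j x
  have hb : pd j C.sm x = C.sm x * pd j C.b x :=
    pd_cexp (C.contDiff_b.differentiable one_ne_zero) j x
  rw [pd_c0_eq_pd_sg_mul_sm, pd_mul (C.contDiff_sg.differentiable one_ne_zero)
    (C.contDiff_sm.differentiable one_ne_zero), ha, hb, c0]
  ring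

end Coeffs

/-! ### The second order terms in dimension three -/

/-- The projection `proj l` onto the forms of degree `l` as a linear map. -/
def gradeProj (l : ℕ) : Module.End ℂ (GF n) where
  toFun := proj l
  map_add' u v := by ext S; simp [proj, ite_add_zero]
  map_smul' c u := by ext S; simp [proj]

lemma gradeProj_apply (l : ℕ) (u : GF n) : gradeProj l u = proj l u := rfl

lemma proj_dotProduct_evenPart {l : ℕ} (hl : Even l) (u v : GF n) :
    proj l u ⬝ᵥ evenPart v = proj l u ⬝ᵥ v :=
  sum_congr rfl fun S _ => by
    by_cases h : #S = l <;> simp [proj, evenPart_apply, h, hl]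

lemma proj_dotProduct_oddPart {l : ℕ} (hl : ¬Even l) (u v : GF n) :
    proj l u ⬝ᵥ oddPart v = proj l u ⬝ᵥ v :=
  sum_congr rfl fun S _ => by
    by_cases h : #S = l <;> simp [proj, oddPart_apply, h, hl]

lemma intMul_proj_succ (j : Fin n) (l : ℕ) (u : GF n) :
    intMul j (proj (l + 1) u) = proj l (intMul j u) := by
  funext S
  by_cases hj : j ∈ S <;> simp [intMul_apply, proj, hj]

lemma extMul_proj (j : Fin n) (l : ℕ) (u : GF n) :
    extMul j (proj l u) = proj (l + 1) (extMul j u) := by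
  funext S
  by_cases hj : j ∈ S
  · simp only [extMul_apply, proj, hj, if_true, ← card_erase_add_one hj, add_left_inj, mul_ite,
      mul_zero]
  · simp only [extMul_apply, proj, hj, if_false, ite_self]

lemma proj_one_dotProduct (u v : GF n) :
    proj 1 u ⬝ᵥ v = (fun k => u {k}) ⬝ᵥ fun k => v {k} := by
  have hproj : proj 1 u = ∑ k, Pi.single {k} (u {k}) := by
    rw [← oneG_eq_sum_single]
    funext S
    simp only [proj, oneG, card_eq_one]
    split_ifs with h
    · obtain ⟨k, rfl⟩ := h
      simp
    · exact (sum_eq_zero fun k _ => if_neg fun hk => h ⟨k, hk⟩).symm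
  simp only [hproj, sum_dotProduct, single_dotProduct]
  rfl

lemma proj_two_dotProduct (u v : GF 3) : proj 2 u ⬝ᵥ v = star2 u ⬝ᵥ star2 v := by
  have hpairs : ({S | #S = 2} : Finset (Finset (Fin 3))) = {{1, 2}, {0, 2}, {0, 1}} := by decide
  have hsum : proj 2 u ⬝ᵥ v = ∑ S with #S = 2, u S * v S := by
    simp only [dotProduct, proj, ite_mul, zero_mul, sum_filter]
  rw [hsum, hpairs, sum_insert (by decide), sum_insert (by decide), sum_singleton,
    dotProduct, Fin.sum_univ_three]
  simp [star2, add_assoc]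

lemma intMul_apply_singleton (j : Fin 3) (u : GF 3) :
    (fun k => intMul j u {k}) = crossProduct (star2 u) (Pi.single j 1) := by
  funext k
  fin_cases j <;> fin_cases k <;>
    simp [intMul_apply, star2, crossProduct, posSign, filter_singleton, pair_comm (1 : Fin 3) 0,
      pair_comm (2 : Fin 3)]

lemma star2_extMul (j : Fin 3) (u : GF 3) :
    star2 (extMul j u) = crossProduct (Pi.single j 1) fun k => u {k} := by
  funext k
  fin_cases j <;> fin_cases k <;>
    simp [extMul_apply, star2, crossProduct, posSign, filter_insert, filter_singleton,
      erase_insert_of_ne]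

lemma intMul_evenPart_dotProduct_intMul (j k : Fin 3) (u p : GF 3) :
    intMul k (evenPart u) ⬝ᵥ intMul j p
      = (if j = k then proj 2 u ⬝ᵥ p else 0) - star2 u j * star2 p k := by
  rw [← intMul_proj_two, intMul_proj_succ, proj_one_dotProduct, intMul_apply_singleton,
    intMul_apply_singleton, cross_dot_cross, proj_two_dotProduct]
  simp [Pi.single_apply]

lemma extMul_oddPart_dotProduct_extMul (j k : Fin 3) (u p : GF 3) :
    extMul k (oddPart u) ⬝ᵥ extMul j p
      = (if j = k then proj 1 u ⬝ᵥ p else 0) - u {j} * p {k} := by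
  rw [← extMul_proj_one, extMul_proj, proj_two_dotProduct, star2_extMul, star2_extMul,
    cross_dot_cross, proj_one_dotProduct]
  simp [Pi.single_apply, mul_comm]

lemma symmPart_evenPart_dotProduct (j k : Fin 3) (u p : GF 3) :
    symmPart j k (evenPart u) ⬝ᵥ p = (if j = k then (proj 0 u - proj 2 u) ⬝ᵥ p else 0)
      + (star2 u j * star2 p k + star2 u k * star2 p j) := by
  simp only [symmPart, LinearMap.sub_apply, Module.End.mul_apply, sub_dotProduct, extMul_dotProduct,
    intMul_evenPart_dotProduct_intMul, eq_comm (a := k)]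
  rw [evenPart_eq_proj]
  split_ifs
  · rw [Module.End.one_apply, add_dotProduct]
    ring
  · rw [LinearMap.zero_apply, zero_dotProduct]
    ring

lemma symmPart_oddPart_dotProduct (j k : Fin 3) (u p : GF 3) :
    symmPart j k (oddPart u) ⬝ᵥ p = (if j = k then (proj 1 u - proj 3 u) ⬝ᵥ p else 0)
      - (u {j} * p {k} + u {k} * p {j}) := by
  have hsymm : symmPart j k = intMul j * extMul k + intMul k * extMul j
      - if j = k then (1 : Module.End ℂ (GF 3)) else 0 := by
    simp only [symmPart, intMul_mul_extMul, eq_comm (a := k)]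
    abel
  simp only [hsymm, LinearMap.sub_apply, LinearMap.add_apply, Module.End.mul_apply, sub_dotProduct,
    add_dotProduct, intMul_dotProduct, extMul_oddPart_dotProduct_extMul, eq_comm (a := k)]
  rw [oddPart_eq_proj]
  split_ifs
  · rw [Module.End.one_apply, add_dotProduct]
    ring
  · rw [LinearMap.zero_apply, zero_dotProduct]
    ring

lemma dstarPair_eq (A u v : Fin 3 → ℂ) (du dv : Fin 3 → Fin 3 → ℂ) :
    dstarPair A u v du dv = -∑ j, ∑ k, A j *
      ((du k j * v k + du k k * v j) + (u j * dv k k + u k * dv k j)) := by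
  simp only [dstarPair, mul_neg, sum_neg_distrib, mul_sum]
  exact congrArg _ (sum_congr rfl fun j _ => sum_congr rfl fun k _ => by ring)

lemma leibniz_symmPart_mul_evenPart (j k : Fin 3) (u du p dp : GF 3) :
    leibniz u du p dp (symmPart j k * evenPart)
      = (if j = k then leibniz u du p dp (gradeProj 0 - gradeProj 2) else 0)
        + ((star2 du j * star2 p k + star2 du k * star2 p j)
          + (star2 u j * star2 dp k + star2 u k * star2 dp j)) := by
  simp only [leibniz_apply, Module.End.mul_apply, symmPart_evenPart_dotProduct,
    LinearMap.sub_apply, gradeProj_apply]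
  split_ifs <;> ring

lemma leibniz_symmPart_mul_oddPart (j k : Fin 3) (u du p dp : GF 3) :
    leibniz u du p dp (symmPart j k * oddPart)
      = -(if j = k then leibniz u du p dp (gradeProj 3 - gradeProj 1) else 0)
        - ((du {j} * p {k} + du {k} * p {j}) + (u {j} * dp {k} + u {k} * dp {j})) := by
  simp only [leibniz_apply, Module.End.mul_apply, symmPart_oddPart_dotProduct,
    LinearMap.sub_apply, gradeProj_apply, sub_dotProduct]
  split_ifs <;> ring

lemma sum_mul_leibniz_symmPart_mul_evenPart (A : Fin 3 → ℂ) (D E : Fin 3 → GF 3) (u p : GF 3) :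
    ∑ j, ∑ k, A j * leibniz u (D k) p (E k) (symmPart j k * evenPart)
      = ∑ j, A j * leibniz u (D j) p (E j) (gradeProj 0 - gradeProj 2)
        - dstarPair A (star2 u) (star2 p) (fun j => star2 (D j)) fun j => star2 (E j) := by
  simp only [dstarPair_eq, leibniz_symmPart_mul_evenPart, mul_add (A _) (ite _ _ _),
    sum_add_distrib, mul_ite, mul_zero, sum_ite_eq, mem_univ, if_true, sub_neg_eq_add]

lemma sum_mul_leibniz_symmPart_mul_oddPart (A : Fin 3 → ℂ) (D E : Fin 3 → GF 3) (u p : GF 3) :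
    ∑ j, ∑ k, A j * leibniz u (D k) p (E k) (symmPart j k * oddPart)
      = dstarPair A (fun k => u {k}) (fun k => p {k}) (fun j k => D j {k}) (fun j k => E j {k})
        - ∑ j, A j * leibniz u (D j) p (E j) (gradeProj 3 - gradeProj 1) := by
  simp only [dstarPair_eq, leibniz_symmPart_mul_oddPart, mul_sub (A _), mul_neg,
    sum_sub_distrib, sum_neg_distrib, mul_ite, mul_zero, sum_ite_eq, mem_univ, if_true]
  ring

/-! ### The weak formulation of the second order equation -/

section SecondOrder

variable (C : Coeffs)

lemma dsgm_dotProduct_eq (x : Pt 3) (u p : GF 3) :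
    ((-(2 * Complex.I * (C.ω : ℂ))) • vee (C.dsgm x) (proj 2 u)
        + (2 * Complex.I * (C.ω : ℂ)) • wedge (C.dsgm x) (proj 1 u)) ⬝ᵥ p
      = 2 * ∑ k, pd k C.c0 x * ((extMul k (oddPart u) + intMul k (evenPart u)) ⬝ᵥ p) := by
  simp only [Coeffs.dsgm, vee_oneG, wedge_oneG, map_sum, map_smul, intMul_proj_two,
    extMul_proj_one, gradeInv_intMul_evenPart, C.pd_c0_eq_pd_sg_mul_sm, add_dotProduct,
    smul_dotProduct, sum_dotProduct, neg_dotProduct, smul_eq_mul, mul_sum, ← sum_add_distrib]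
  exact sum_congr rfl fun k _ => by ring

lemma oneG_mul_proj_add_proj_dotProduct (A B : Fin 3 → ℂ) (u p : GF 3) :
    (oneG B ⬝ᵥ oneG B) * ((proj 0 u + proj 2 u) ⬝ᵥ (proj 0 p + proj 2 p))
        + (oneG A ⬝ᵥ oneG A) * ((proj 1 u + proj 3 u) ⬝ᵥ (proj 1 p + proj 3 p))
      = ((∑ j, B j * B j) • evenPart u + (∑ j, A j * A j) • oddPart u) ⬝ᵥ p := by
  simp only [oneG_dotProduct_oneG, ← evenPart_eq_proj, ← oddPart_eq_proj, ← evenPart_dotProduct,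
    ← oddPart_dotProduct, ← Module.End.mul_apply, evenPart_mul_evenPart, oddPart_mul_oddPart,
    add_dotProduct, smul_dotProduct, smul_eq_mul]

lemma leibniz_gradeProj_zero_sub_two (u du p dp : GF 3) :
    (proj 0 du - proj 2 du) ⬝ᵥ (proj 0 p + proj 2 p)
        + (proj 0 u - proj 2 u) ⬝ᵥ (proj 0 dp + proj 2 dp)
      = leibniz u du p dp (gradeProj 0 - gradeProj 2) := by
  simp only [← evenPart_eq_proj, sub_dotProduct, leibniz_apply, LinearMap.sub_apply,
    gradeProj_apply, proj_dotProduct_evenPart Even.zero, proj_dotProduct_evenPart even_two]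

lemma leibniz_gradeProj_three_sub_one (u du p dp : GF 3) :
    (proj 3 du - proj 1 du) ⬝ᵥ (proj 1 p + proj 3 p)
        + (proj 3 u - proj 1 u) ⬝ᵥ (proj 1 dp + proj 3 dp)
      = leibniz u du p dp (gradeProj 3 - gradeProj 1) := by
  simp only [← oddPart_eq_proj, sub_dotProduct, leibniz_apply, LinearMap.sub_apply,
    gradeProj_apply, proj_dotProduct_oddPart (by decide : ¬Even 3),
    proj_dotProduct_oddPart Nat.not_even_one]

variable {C} {w φ : Form 3} {Dw : Fin 3 → Form 3}

lemma H1locWith.integral_symmPart_sub_integral_symmPart (hw : H1locWith w Dw) (hφ : TestForm φ)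
    {a b : Pt 3 → ℂ} (ha : ContDiff ℝ 1 a) (hb : ContDiff ℝ 1 b) :
    (∫ x, ∑ j, ∑ k, pd j b x *
        leibniz (w x) (Dw k x) (φ x) (Dcl φ k x) (symmPart j k * evenPart))
      - ∫ x, ∑ j, ∑ k, pd j a x *
        leibniz (w x) (Dw k x) (φ x) (Dcl φ k x) (symmPart j k * oddPart)
    = (∫ x, ((∑ j, pd j b x *
          leibniz (w x) (Dw j x) (φ x) (Dcl φ j x) (gradeProj 0 - gradeProj 2))
        + ∑ j, pd j a x *
          leibniz (w x) (Dw j x) (φ x) (Dcl φ j x) (gradeProj 3 - gradeProj 1)))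
      - (∫ x, dstarPair (fun k => pd k a x) (fun j => w x {j}) (fun j => φ x {j})
          (fun j k => Dw j x {k}) (fun j k => Dcl φ j x {k}))
      - ∫ x, dstarPair (fun k => pd k b x) (star2 (w x)) (star2 (φ x))
          (fun j => star2 (Dw j x)) (fun j => star2 (Dcl φ j x)) := by
  have hdiag {f : Pt 3 → ℂ} (hf : ContDiff ℝ 1 f) (M : Module.End ℂ (GF 3)) :
      Integrable (fun x => ∑ j, pd j f x * leibniz (w x) (Dw j x) (φ x) (Dcl φ j x) M) volume :=
    integrable_finsetSum _ fun j _ =>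
      hw.integrable_continuous_mul_leibniz hφ (continuous_pd hf j) M j
  have hb_pair := (hdiag hb (gradeProj 0 - gradeProj 2)).sub
    (hw.integrable_sum_pd_mul_leibniz hφ hb fun j k => symmPart j k * evenPart)
  have ha_pair := (hdiag ha (gradeProj 3 - gradeProj 1)).add
    (hw.integrable_sum_pd_mul_leibniz hφ ha fun j k => symmPart j k * oddPart)
  simp only [Pi.sub_def, sum_mul_leibniz_symmPart_mul_evenPart, sub_sub_cancel] at hb_pair
  simp only [Pi.add_def, sum_mul_leibniz_symmPart_mul_oddPart, add_sub_cancel] at ha_pair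
  simp only [sum_mul_leibniz_symmPart_mul_evenPart, sum_mul_leibniz_symmPart_mul_oddPart]
  rw [integral_sub (hdiag hb _) hb_pair, integral_sub ha_pair (hdiag ha _),
    integral_add (hdiag hb _) (hdiag ha _)]
  ring

lemma qtpair_eq_add_integral_symmPart (hw : H1locWith w Dw) (hφ : TestForm φ) :
    Qtpair C w Dw φ
      = -(∫ x, (C.ω : ℂ) ^ 2 * (C.γ x * (C.μf x : ℂ) - ((C.ε₀ * C.μ₀ : ℝ) : ℂ)) * (w x ⬝ᵥ φ x))
        + (∫ x, 2 * ∑ k, pd k C.c0 x *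
            ((extMul k (oddPart (w x)) + intMul k (evenPart (w x))) ⬝ᵥ φ x))
        + (∫ x, ((∑ j, pd j C.b x * pd j C.b x) • evenPart (w x)
            + (∑ j, pd j C.a x * pd j C.a x) • oddPart (w x)) ⬝ᵥ φ x)
        + ((∫ x, ∑ j, ∑ k, pd j C.b x *
              leibniz (w x) (Dw k x) (φ x) (Dcl φ k x) (symmPart j k * evenPart))
            - ∫ x, ∑ j, ∑ k, pd j C.a x *
              leibniz (w x) (Dw k x) (φ x) (Dcl φ k x) (symmPart j k * oddPart)) := by
  rw [hw.integral_symmPart_sub_integral_symmPart hφ C.contDiff_a C.contDiff_b]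
  simp only [Qtpair, ginner_eq_dotProduct, dsgm_dotProduct_eq]
  simp only [Coeffs.da, Coeffs.db, oneG_mul_proj_add_proj_dotProduct,
    leibniz_gradeProj_zero_sub_two, leibniz_gradeProj_three_sub_one]
  rw [← add_sub_assoc, ← add_sub_assoc]

lemma H1locWith.integral_hodge_sub_integral_mass (hw : H1locWith w Dw) (hφ : TestForm φ) :
    (∫ x, ((gdel fun j => Dw j x) ⬝ᵥ (gdel fun j => Dcl φ j x)
        + (gd fun j => Dw j x) ⬝ᵥ (gd fun j => Dcl φ j x)
        - (C.ω : ℂ) ^ 2 * ((C.ε₀ * C.μ₀ : ℝ) : ℂ) * (w x ⬝ᵥ φ x)))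
      - (∫ x, (C.ω : ℂ) ^ 2 * (C.γ x * (C.μf x : ℂ) - ((C.ε₀ * C.μ₀ : ℝ) : ℂ)) * (w x ⬝ᵥ φ x))
      = (∫ x, ((gdel fun j => Dw j x) ⬝ᵥ (gdel fun j => Dcl φ j x)
        + (gd fun j => Dw j x) ⬝ᵥ (gd fun j => Dcl φ j x)))
        + ∫ x, C.c0 x * C.c0 x * (w x ⬝ᵥ φ x) := by
  have hwφ := hw.l2locForm.integrable_dotProduct hφ
  have hc0 : Integrable (fun x => C.c0 x * C.c0 x * (w x ⬝ᵥ φ x)) volume :=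
    hw.l2locForm.integrable_continuous_mul_dotProduct hφ
      (C.contDiff_c0.continuous.mul C.contDiff_c0.continuous)
  have hcoeff (x : Pt 3) :
      (C.ω : ℂ) ^ 2 * (C.γ x * (C.μf x : ℂ) - ((C.ε₀ * C.μ₀ : ℝ) : ℂ)) * (w x ⬝ᵥ φ x)
        = -(C.c0 x * C.c0 x * (w x ⬝ᵥ φ x))
          - (C.ω : ℂ) ^ 2 * ((C.ε₀ * C.μ₀ : ℝ) : ℂ) * (w x ⬝ᵥ φ x) := by
    rw [C.c0_mul_self]
    ring
  simp only [hcoeff]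
  rw [integral_sub (hw.integrable_gdel_dotProduct_add_gd_dotProduct hφ) (hwφ.const_mul _),
    integral_sub hc0.fun_neg (hwφ.const_mul _), integral_neg]
  ring

theorem H1locWith.integral_Pfull_dotProduct_Pfull (hw : H1locWith w Dw) (hφ : TestForm φ) :
    ∫ x, Pfull (C.da x) (C.db x) (C.c0 x) (fun j => Dw j x) (w x) ⬝ᵥ
        Pfull (C.da x) (C.db x) (C.c0 x) (fun j => Dcl φ j x) (φ x)
      = (∫ x, ginner (gdel fun j => Dw j x) (gdel fun j => Dcl φ j x)
          + ginner (gd fun j => Dw j x) (gd fun j => Dcl φ j x)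
          - (C.ω : ℂ) ^ 2 * ((C.ε₀ * C.μ₀ : ℝ) : ℂ) * ginner (w x) (φ x))
        + Qtpair C w Dw φ := by
  simp only [Coeffs.da, Coeffs.db, Pfull_oneG, ginner_eq_dotProduct]
  rw [hw.integral_diracP_dotProduct_diracP hφ C.contDiff_a C.contDiff_b C.contDiff_c0 C.pd_c0,
    qtpair_eq_add_integral_symmPart hw hφ]
  linear_combination -(hw.integral_hodge_sub_integral_mass (C := C) hφ)

end SecondOrder

/-! ### Solutions of the transposed first order system -/

section FirstOrder

variable {C : Coeffs} {w v : Form 3} {Dw : Fin 3 → Form 3}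

lemma neg_altSign_dotProduct_gd_add_gdel (v : GF n) (D : Fin n → GF n) :
    -altSign v ⬝ᵥ (gd D + gdel D) = v ⬝ᵥ ∑ j, symbolP j (D j) := by
  simp only [gd_add_gdel, symbolP_apply, sum_neg_distrib, ← map_sum, dotProduct_neg,
    neg_dotProduct, ← gradeInv_dotProduct]
  rfl

lemma dotProduct_Pfull_oneG (A B : Fin 3 → ℂ) (c : ℂ) (v : GF 3) (D : Fin 3 → GF 3) (p : GF 3) :
    v ⬝ᵥ Pfull (oneG A) (oneG B) c D p
      = v ⬝ᵥ ∑ j, symbolP j (D j) + P0t (oneG A) (oneG B) c v ⬝ᵥ p := by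
  rw [Pfull_oneG, P0t_oneG, diracP, add_assoc, dotProduct_add, dotProduct_add, add_dotProduct,
    zeroOrder_dotProduct, dotProduct_smul, smul_dotProduct]

lemma L2locForm.covectorMul {u : Form n} (hu : L2locForm u) {A : Fin n → Pt n → ℂ}
    (hA : ∀ j, Continuous (A j)) : L2locForm fun x => covectorMul (fun j => A j x) (u x) := by
  simpa only [EMPaper.covectorMul, LinearMap.sum_apply, LinearMap.smul_apply] using
    sum fun j => (hu.map (cliffordPos j)).smul (hA j)

lemma L2locForm.zeroOrder {u : Form n} (hu : L2locForm u) {A B : Fin n → Pt n → ℂ}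
    (hA : ∀ j, Continuous (A j)) (hB : ∀ j, Continuous (B j)) :
    L2locForm fun x => zeroOrder (fun j => A j x) (fun j => B j x) (u x) :=
  ((hu.map oddPart).covectorMul hA).add ((hu.map evenPart).covectorMul hB)

lemma H1locWith.l2locForm_Pfull (hw : H1locWith w Dw) :
    L2locForm fun x => Pfull (C.da x) (C.db x) (C.c0 x) (fun j => Dw j x) (w x) := by
  simpa only [Coeffs.da, Coeffs.db, Pfull_oneG, diracP] using
    ((L2locForm.sum fun j => (hw.l2locForm_weakPD j).map (symbolP j)).add
      (hw.l2locForm.zeroOrder (continuous_pd C.contDiff_a) (continuous_pd C.contDiff_b))).add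
      (hw.l2locForm.smul C.contDiff_c0.continuous)

lemma L2locForm.P0t (hv : L2locForm v) :
    L2locForm fun x => P0t (C.da x) (C.db x) (C.c0 x) (v x) := by
  simpa only [Coeffs.da, Coeffs.db, P0t_oneG] using
    (hv.zeroOrder (continuous_pd C.contDiff_b) (continuous_pd C.contDiff_a)).add
      (hv.smul C.contDiff_c0.continuous)

lemma L2locForm.isWeakSolPt_iff (hv : L2locForm v) :
    IsWeakSolPt C v ↔ ∀ φ : Form 3, TestForm φ →
      ∫ x, (v x ⬝ᵥ ∑ j, symbolP j (Dcl φ j x)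
        + EMPaper.P0t (C.da x) (C.db x) (C.c0 x) (v x) ⬝ᵥ φ x) = 0 := by
  refine forall₂_congr fun φ hφ => ?_
  have hprincipal : Integrable (fun x => v x ⬝ᵥ ∑ j, symbolP j (Dcl φ j x)) volume := by
    simpa only [dotProduct_sum, symbolP_dotProduct] using integrable_finsetSum univ fun j _ =>
      (hv.map (symbolP j)).integrable_dotProduct (hφ.dcl j)
  simp only [ginner_eq_dotProduct, neg_altSign_dotProduct_gd_add_gdel]
  rw [integral_add hprincipal (hv.P0t.integrable_dotProduct hφ)]

theorem IsWeakSolPt.exists_l2loc_weakPD (h : IsWeakSolPt C v) (hv : L2locForm v)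
    (S : Finset (Fin 3)) (j : Fin 3) : ∃ g, HasWeakPD j (fun x => v x S) g ∧ L2loc g := by
  refine hv.exists_l2loc_weakPD_of_symbolP ((hv.P0t (C := C)).map (-1)) (fun φ hφ => ?_) S j
  simpa only [LinearMap.neg_apply, Module.End.one_apply, neg_dotProduct, sub_neg_eq_add] using
    hv.isWeakSolPt_iff.1 h φ hφ

end FirstOrder

/-- Proposition 2.2.  If the graded form `w`, with components in
`H¹_loc(ℝ³)`, satisfies
`∫ [⟨δw,δφ⟩ + ⟨dw,dφ⟩ − ω²ε₀μ₀⟨w,φ⟩] dx + ⟨Q̃(γ,μ,ω)w, φ⟩ = 0`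
for every smooth compactly supported graded form `φ`, then `v := P(γ,μ,ω)w` is a weak
solution of `P(γ,μ,ω)^t v = 0` on `ℝ³` and every component of `v` belongs to `H¹_loc`. -/
theorem statement1 (C : Coeffs) (w : Form 3) (Dw : Fin 3 → Form 3)
    (hw : H1locWith w Dw)
    (heq : ∀ φ : Form 3, TestForm φ →
      (∫ x, ginner (gdel fun j => Dw j x) (gdel fun j => Dcl φ j x)
          + ginner (gd fun j => Dw j x) (gd fun j => Dcl φ j x)
          - (C.ω : ℂ) ^ 2 * ((C.ε₀ * C.μ₀ : ℝ) : ℂ) * ginner (w x) (φ x))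
        + Qtpair C w Dw φ = 0) :
    IsWeakSolPt C
      (fun x => Pfull (C.da x) (C.db x) (C.c0 x) (fun j => Dw j x) (w x)) ∧
    ∀ S : Finset (Fin 3),
      L2loc (fun x => Pfull (C.da x) (C.db x) (C.c0 x) (fun j => Dw j x) (w x) S) ∧
      ∀ j : Fin 3, ∃ h : Pt 3 → ℂ,
        HasWeakPD j
          (fun x => Pfull (C.da x) (C.db x) (C.c0 x) (fun j' => Dw j' x) (w x) S) h ∧
        L2loc h := by
  have hv := hw.l2locForm_Pfull (C := C)
  have hweak : IsWeakSolPt C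
      (fun x => Pfull (C.da x) (C.db x) (C.c0 x) (fun j => Dw j x) (w x)) := by
    refine hv.isWeakSolPt_iff.2 fun φ hφ => ?_
    simpa only [Coeffs.da, Coeffs.db, dotProduct_Pfull_oneG] using
      (hw.integral_Pfull_dotProduct_Pfull hφ).trans (heq φ hφ)
  exact ⟨hweak, fun S => ⟨hv S, hweak.exists_l2loc_weakPD hv S⟩⟩

end EMPaper
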